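/- Suppose B = 0, i.e. Y has i.i.d. N(0, σ²) entries (the global null hypothesis). Then the Kac–Rice statistic S_{1,0} = (∫_{d₁}^{∞} e^{−z²/(2σ²)} z^{N−p} ∏_{j=2}^{p} (z² − d_j²) dz) / (∫_{d₂}^{∞} e^{−z²/(2σ²)} z^{N−p} ∏_{j=2}^{p} (z² − d_j²) dz) is uniformly distributed on (0,1). -/

import Mathlib

open MeasureTheory ProbabilityTheory Matrix

/-!
Moving `Y` along its top rank-one part, `Y ↦ Y + t u₁ v₁ᵀ`, replaces `d₁` by `d₁ + t` and keeps the
other singular values and all singular vectors. This map has Jacobian `J(d₁ + t) / J(d₁)`, where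
`J(z) = z ^ (N - p) * ∏ (z² - d_j²)` over `2 ≤ j`, so `dY / J(d₁)` is invariant under these shifts.
Since the Gaussian density depends on `d₁` only through `exp (-d₁² / (2σ²))`, given the other
singular values `d₁` has density proportional to `exp (-z² / (2σ²)) J(z)` on `(d₂, ∞)`, and
`S_{1,0}` is the survival function of that law evaluated at `d₁` itself.
-/

section ProductDensity

theorem lintegral_pi_prod {n : ℕ} {α : Fin n → Type*} [∀ i, MeasurableSpace (α i)]
    (μ : ∀ i, Measure (α i)) [∀ i, SigmaFinite (μ i)] {f : ∀ i, α i → ENNReal}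
    (hf : ∀ i, Measurable (f i)) :
    ∫⁻ x, ∏ i, f i (x i) ∂Measure.pi μ = ∏ i, ∫⁻ x, f i x ∂μ i := by
  induction n with
  | zero => simp
  | succ n ih =>
    have htail : Measurable fun y : ∀ i : Fin n, α i.succ => ∏ i, f i.succ (y i) :=
      Finset.measurable_prod _ fun i _ => (hf i.succ).comp (measurable_pi_apply i)
    have hprod : Measurable fun x : ∀ i, α i => ∏ i, f i (x i) :=
      Finset.measurable_prod _ fun i _ => (hf i).comp (measurable_pi_apply i)
    rw [← (measurePreserving_piFinSuccAbove μ 0).symm.lintegral_comp hprod]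
    simp only [Fin.prod_univ_succ, MeasurableEquiv.piFinSuccAbove_symm_apply,
      Fin.insertNthEquiv_apply, Fin.insertNth_zero, Fin.cons_zero, Fin.cons_succ]
    rw [← ih (fun i => μ i.succ) fun i => hf i.succ]
    exact lintegral_prod_mul (ν := Measure.pi fun i : Fin n => μ i.succ) (hf 0).aemeasurable
      htail.aemeasurable

theorem pi_withDensity {n : ℕ} {α : Fin n → Type*} [∀ i, MeasurableSpace (α i)]
    (μ : ∀ i, Measure (α i)) [∀ i, SigmaFinite (μ i)] {f : ∀ i, α i → ENNReal}
    (hf : ∀ i, Measurable (f i)) [∀ i, SigmaFinite ((μ i).withDensity (f i))] :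
    Measure.pi (fun i => (μ i).withDensity (f i)) =
      (Measure.pi μ).withDensity fun x => ∏ i, f i (x i) := by
  refine Measure.pi_eq fun s hs => ?_
  have hindicator (x : ∀ i, α i) : (Set.univ.pi s).indicator (fun x => ∏ i, f i (x i)) x =
      ∏ i, (s i).indicator (f i) (x i) := by
    by_cases hx : x ∈ Set.univ.pi s
    · rw [Set.indicator_of_mem hx]
      exact Finset.prod_congr rfl fun i _ => (Set.indicator_of_mem (hx i trivial) _).symm
    · obtain ⟨i, hi⟩ : ∃ i, x i ∉ s i := by simpa using hx
      rw [Set.indicator_of_notMem hx]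
      exact (Finset.prod_eq_zero (Finset.mem_univ i) (Set.indicator_of_notMem hi _)).symm
  rw [withDensity_apply _ (.univ_pi hs), ← lintegral_indicator (.univ_pi hs)]
  simp_rw [hindicator, withDensity_apply _ (hs _), ← lintegral_indicator (hs _)]
  exact lintegral_pi_prod μ fun i => (hf i).indicator (hs i)

theorem pi_pi_gaussianReal_eq_withDensity (N p : ℕ) {v : NNReal} (hv : v ≠ 0) :
    Measure.pi (fun _ : Fin N => Measure.pi fun _ : Fin p => gaussianReal 0 v) =
      (volume : Measure (Fin N → Fin p → ℝ)).withDensity fun Y => ENNReal.ofReal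
        ((√(2 * Real.pi * v))⁻¹ ^ (p * N) * Real.exp (-(∑ i, ∑ j, Y i j ^ 2) / (2 * v))) := by
  have hrow : Measure.pi (fun _ : Fin p => gaussianReal 0 v) =
      volume.withDensity fun y : Fin p → ℝ => ∏ j, gaussianPDF 0 v (y j) := by
    have hprob : IsProbabilityMeasure (volume.withDensity (gaussianPDF 0 v)) :=
      gaussianReal_of_var_ne_zero 0 hv ▸ inferInstance
    simp_rw [gaussianReal_of_var_ne_zero 0 hv]
    exact pi_withDensity _ fun _ => measurable_gaussianPDF 0 v
  have hprob : IsProbabilityMeasure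
      (volume.withDensity fun y : Fin p → ℝ => ∏ j, gaussianPDF 0 v (y j)) :=
    hrow ▸ inferInstance
  have hmeas : Measurable fun y : Fin p → ℝ => ∏ j, gaussianPDF 0 v (y j) :=
    Finset.measurable_prod _ fun j _ => (measurable_gaussianPDF 0 v).comp (measurable_pi_apply j)
  simp_rw [hrow]
  refine (pi_withDensity _ fun _ => hmeas).trans (congrArg _ (funext fun Y => ?_))
  simp_rw [gaussianPDF, ← ENNReal.ofReal_prod_of_nonneg fun _ _ => gaussianPDFReal_nonneg 0 v _]
  rw [← ENNReal.ofReal_prod_of_nonneg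
    fun _ _ => Finset.prod_nonneg fun _ _ => gaussianPDFReal_nonneg 0 v _]
  simp [gaussianPDFReal, Finset.prod_mul_distrib, ← Real.exp_sum, ← Finset.sum_div, pow_mul]

end ProductDensity

section ProbabilityIntegralTransform

/-- The survival function at `z` of the probability measure with density proportional to `q` on
the half-line `(m, ∞)`. -/
noncomputable def survivalRatio (q : ℝ → ℝ) (m z : ℝ) : ℝ :=
  (∫ x in Set.Ioi z, q x) / ∫ x in Set.Ioi m, q x

variable {q : ℝ → ℝ} {m : ℝ}

theorem survivalRatio_const_mul {c : ℝ} (hc : c ≠ 0) (q : ℝ → ℝ) (m z : ℝ) :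
    survivalRatio (fun x => c * q x) m z = survivalRatio q m z := by
  simp only [survivalRatio, integral_const_mul, mul_div_mul_left _ _ hc]

theorem setIntegral_Ioi_pos (hint : IntegrableOn q (Set.Ioi m)) (hpos : ∀ x, m < x → 0 < q x) :
    0 < ∫ x in Set.Ioi m, q x := by
  refine (setIntegral_pos_iff_support_of_nonneg_ae ?_ hint).2 ?_
  · exact (ae_restrict_iff' measurableSet_Ioi).2 (.of_forall fun x hx => (hpos x hx).le)
  · have hsub : Set.Ioi m ⊆ Function.support q ∩ Set.Ioi m := fun x hx => ⟨(hpos x hx).ne', hx⟩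
    exact (by simp : 0 < volume (Set.Ioi m)).trans_le (measure_mono hsub)

theorem survivalRatio_eq_one_sub (hint : IntegrableOn q (Set.Ioi m))
    (hpos : ∀ x, m < x → 0 < q x) {z : ℝ} (hz : m ≤ z) :
    survivalRatio q m z = 1 - (∫ x in m..z, q x) / ∫ x in Set.Ioi m, q x := by
  have hsplit := intervalIntegral.integral_interval_add_Ioi hint
    (hint.mono_set (Set.Ioi_subset_Ioi hz))
  rw [survivalRatio, eq_sub_iff_add_eq, ← add_div, add_comm, hsplit,
    div_self (setIntegral_Ioi_pos hint hpos).ne']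

theorem survivalRatio_pos (hint : IntegrableOn q (Set.Ioi m)) (hpos : ∀ x, m < x → 0 < q x)
    {z : ℝ} (hz : m ≤ z) : 0 < survivalRatio q m z :=
  div_pos (setIntegral_Ioi_pos (hint.mono_set (Set.Ioi_subset_Ioi hz))
    fun x hx => hpos x (hz.trans_lt hx)) (setIntegral_Ioi_pos hint hpos)

theorem hasDerivWithinAt_survivalRatio (hq : Continuous q) (hint : IntegrableOn q (Set.Ioi m))
    (hpos : ∀ x, m < x → 0 < q x) {z : ℝ} (hz : m ≤ z) :
    HasDerivWithinAt (survivalRatio q m) (-(q z / ∫ x in Set.Ioi m, q x)) (Set.Ici m) z :=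
  (((hq.integral_hasStrictDerivAt m z).hasDerivAt.div_const _).const_sub 1).hasDerivWithinAt.congr
    (fun _ hx => survivalRatio_eq_one_sub hint hpos hx) (survivalRatio_eq_one_sub hint hpos hz)

theorem strictAntiOn_survivalRatio (hq : Continuous q) (hint : IntegrableOn q (Set.Ioi m))
    (hpos : ∀ x, m < x → 0 < q x) : StrictAntiOn (survivalRatio q m) (Set.Ici m) := by
  refine strictAntiOn_of_deriv_neg (convex_Ici m)
    (fun z hz => (hasDerivWithinAt_survivalRatio hq hint hpos hz).continuousWithinAt)
    fun z hz => ?_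
  rw [interior_Ici] at hz
  rw [((hasDerivWithinAt_survivalRatio hq hint hpos hz.le).hasDerivAt (Ici_mem_nhds hz)).deriv]
  exact neg_neg_of_pos (div_pos (hpos z hz) (setIntegral_Ioi_pos hint hpos))

theorem tendsto_survivalRatio_atTop (hint : IntegrableOn q (Set.Ioi m))
    (hpos : ∀ x, m < x → 0 < q x) :
    Filter.Tendsto (survivalRatio q m) Filter.atTop (nhds 0) := by
  have hlim := ((intervalIntegral_tendsto_integral_Ioi m hint Filter.tendsto_id).div_const
    (∫ x in Set.Ioi m, q x)).const_sub 1
  rw [div_self (setIntegral_Ioi_pos hint hpos).ne', sub_self] at hlim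
  refine hlim.congr' ?_
  filter_upwards [Filter.eventually_ge_atTop m] with z hz
  exact (survivalRatio_eq_one_sub hint hpos hz).symm

theorem image_survivalRatio_Ioi (hq : Continuous q) (hint : IntegrableOn q (Set.Ioi m))
    (hpos : ∀ x, m < x → 0 < q x) : survivalRatio q m '' Set.Ioi m = Set.Ioo 0 1 := by
  have hone : survivalRatio q m m = 1 := div_self (setIntegral_Ioi_pos hint hpos).ne'
  refine Set.Subset.antisymm ?_ fun u hu => ?_
  · rintro _ ⟨z, hz, rfl⟩
    have hz' : m < z := hz
    exact ⟨survivalRatio_pos hint hpos hz'.le, hone ▸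
      strictAntiOn_survivalRatio hq hint hpos Set.self_mem_Ici hz'.le hz'⟩
  · obtain ⟨b, hb, hmb⟩ := (((tendsto_survivalRatio_atTop hint hpos).eventually_lt_const
      hu.1).and (Filter.eventually_ge_atTop m)).exists
    have hcont : ContinuousOn (survivalRatio q m) (Set.Icc m b) := fun z hz =>
      ((hasDerivWithinAt_survivalRatio hq hint hpos hz.1).continuousWithinAt).mono
        Set.Icc_subset_Ici_self
    obtain ⟨z, hz, rfl⟩ := intermediate_value_Ioo' hmb hcont ⟨hb, hone ▸ hu.2⟩
    exact ⟨z, hz.1, rfl⟩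

theorem lintegral_survivalRatio (hq : Continuous q) (hint : IntegrableOn q (Set.Ioi m))
    (hpos : ∀ x, m < x → 0 < q x) (g : ℝ → ENNReal) :
    ∫⁻ z in Set.Ioi m, ENNReal.ofReal (q z / ∫ x in Set.Ioi m, q x) * g (survivalRatio q m z) =
      ∫⁻ u in Set.Ioo 0 1, g u := by
  rw [← image_survivalRatio_Ioi hq hint hpos, lintegral_image_eq_lintegral_abs_deriv_mul
    measurableSet_Ioi
    (fun z hz => (hasDerivWithinAt_survivalRatio hq hint hpos (Set.mem_Ioi.1 hz).le).mono
      Set.Ioi_subset_Ici_self)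
    ((strictAntiOn_survivalRatio hq hint hpos).injOn.mono Set.Ioi_subset_Ici_self)]
  refine setLIntegral_congr_fun measurableSet_Ioi fun z hz => ?_
  simp only [abs_neg,
    abs_of_pos (div_pos (hpos z hz) (setIntegral_Ioi_pos hint hpos))]

theorem lintegral_ofReal_div_setIntegral_Ioi (hq : Continuous q)
    (hint : IntegrableOn q (Set.Ioi m)) (hpos : ∀ x, m < x → 0 < q x) :
    ∫⁻ z in Set.Ioi m, ENNReal.ofReal (q z / ∫ x in Set.Ioi m, q x) = 1 := by
  simpa using lintegral_survivalRatio hq hint hpos 1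

end ProbabilityIntegralTransform

section ShiftInvariance

variable {E R : Type*} [MeasurableSpace E] [MeasurableSpace R]

/-- Invariance of `μ` under the partially defined flow `x ↦ x + t`, with `r` kept fixed, of points
with coordinates `(x, r)` in the region `m r < x`. Only the joint law of `x` and `r` enters: the
left integral runs over the points that stay in the region, the right one over their images. -/
def IsShiftInvariant (μ : Measure E) (x : E → ℝ) (r : E → R) (m : R → ℝ) : Prop :=
  ∀ (t : ℝ) (f : ℝ × R → ENNReal), Measurable f →
    ∫⁻ Y in {Y | m (r Y) < x Y + t}, f (x Y + t, r Y) ∂μ =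
      ∫⁻ Y in {Y | m (r Y) < x Y - t}, f (x Y, r Y) ∂μ

variable {μ : Measure E} [SFinite μ] {x : E → ℝ} {r : E → R} {m : R → ℝ}

theorem IsShiftInvariant.lintegral_swap (h : IsShiftInvariant μ x r m) (hx : Measurable x)
    (hr : Measurable r) (hm : Measurable m) {f : ℝ × ℝ × R → ENNReal} (hf : Measurable f) :
    ∫⁻ Y, (∫⁻ z in Set.Ioi (m (r Y)), f (z, x Y, r Y)) ∂μ =
      ∫⁻ Y, (∫⁻ z in Set.Ioi (m (r Y)), f (x Y, z, r Y)) ∂μ := by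
  let left : E → ℝ → ENNReal := fun Y =>
    {t | m (r Y) < x Y + t}.indicator fun t => f (x Y + t, x Y, r Y)
  let right : E → ℝ → ENNReal := fun Y =>
    {t | m (r Y) < x Y - t}.indicator fun t => f (x Y, x Y - t, r Y)
  have hleft : Measurable (Function.uncurry left) :=
    (by fun_prop : Measurable fun w : E × ℝ => f (x w.1 + w.2, x w.1, r w.1)).indicator
      (measurableSet_lt (by fun_prop) (by fun_prop) :
        MeasurableSet {w : E × ℝ | m (r w.1) < x w.1 + w.2})
  have hright : Measurable (Function.uncurry right) :=
    (by fun_prop : Measurable fun w : E × ℝ => f (x w.1, x w.1 - w.2, r w.1)).indicator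
      (measurableSet_lt (by fun_prop) (by fun_prop) :
        MeasurableSet {w : E × ℝ | m (r w.1) < x w.1 - w.2})
  calc ∫⁻ Y, (∫⁻ z in Set.Ioi (m (r Y)), f (z, x Y, r Y)) ∂μ
    _ = ∫⁻ Y, (∫⁻ t, left Y t) ∂μ := by
        refine lintegral_congr fun Y => ?_
        rw [← lintegral_indicator measurableSet_Ioi, ← lintegral_add_left_eq_self _ (x Y)]
        rfl
    _ = ∫⁻ t, ∫⁻ Y in {Y | m (r Y) < x Y + t}, f (x Y + t, x Y, r Y) ∂μ := by
        rw [lintegral_lintegral_swap hleft.aemeasurable]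
        exact lintegral_congr fun t =>
          lintegral_indicator (measurableSet_lt (by fun_prop) (by fun_prop)) _
    _ = ∫⁻ t, ∫⁻ Y in {Y | m (r Y) < x Y - t}, f (x Y, x Y - t, r Y) ∂μ := by
        refine lintegral_congr fun t => ?_
        simpa using h t (fun w => f (w.1, w.1 - t, w.2)) (by fun_prop)
    _ = ∫⁻ Y, (∫⁻ t, right Y t) ∂μ := by
        rw [lintegral_lintegral_swap hright.aemeasurable]
        exact lintegral_congr fun t =>
          (lintegral_indicator (measurableSet_lt (by fun_prop) (by fun_prop)) _).symm
    _ = ∫⁻ Y, (∫⁻ z in Set.Ioi (m (r Y)), f (x Y, z, r Y)) ∂μ := by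
        refine lintegral_congr fun Y => ?_
        rw [← lintegral_indicator measurableSet_Ioi, ← lintegral_sub_left_eq_self (right Y) (x Y)]
        simp [right, Set.indicator_apply]

variable {q : R → ℝ → ℝ}

theorem measurable_setIntegral_Ioi {α : Type*} [MeasurableSpace α]
    (hq : Measurable (Function.uncurry q)) {s : α → R} (hs : Measurable s) {b : α → ℝ}
    (hb : Measurable b) : Measurable fun w => ∫ z in Set.Ioi (b w), q (s w) z := by
  simp_rw [← integral_indicator measurableSet_Ioi]
  have hset : MeasurableSet {w : α × ℝ | b w.1 < w.2} :=
    measurableSet_lt (by fun_prop) (by fun_prop)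
  have huncurry : Measurable fun w : α × ℝ => q (s w.1) w.2 :=
    hq.comp (by fun_prop : Measurable fun w : α × ℝ => (s w.1, w.2))
  exact (huncurry.indicator hset).stronglyMeasurable.integral_prod_right'.measurable

theorem measurable_survivalRatio (hm : Measurable m) (hq : Measurable (Function.uncurry q)) :
    Measurable fun w : R × ℝ => survivalRatio (q w.1) (m w.1) w.2 :=
  (measurable_setIntegral_Ioi hq measurable_fst measurable_snd).div
    (measurable_setIntegral_Ioi hq measurable_fst (hm.comp measurable_fst))

theorem IsShiftInvariant.lintegral_mul_survivalRatio (h : IsShiftInvariant μ x r m)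
    (hx : Measurable x) (hr : Measurable r) (hm : Measurable m)
    (hq : Measurable (Function.uncurry q)) (hcont : ∀ Y, Continuous (q (r Y)))
    (hint : ∀ Y, IntegrableOn (q (r Y)) (Set.Ioi (m (r Y))))
    (hpos : ∀ Y z, m (r Y) < z → 0 < q (r Y) z) {g : ℝ → ENNReal} (hg : Measurable g) :
    ∫⁻ Y, ENNReal.ofReal (q (r Y) (x Y)) * g (survivalRatio (q (r Y)) (m (r Y)) (x Y)) ∂μ =
      (∫⁻ Y, ENNReal.ofReal (q (r Y) (x Y)) ∂μ) * ∫⁻ u in Set.Ioo 0 1, g u := by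
  set Z : R → ℝ := fun ρ => ∫ z in Set.Ioi (m ρ), q ρ z
  have hS := hg.comp (measurable_survivalRatio hm hq)
  let f : ℝ × ℝ × R → ENNReal := fun w => ENNReal.ofReal (q w.2.2 w.1 / Z w.2.2) *
    (ENNReal.ofReal (q w.2.2 w.2.1) * g (survivalRatio (q w.2.2) (m w.2.2) w.2.1))
  have hf : Measurable f := by
    have hswap : Measurable fun w : ℝ × ℝ × R => (w.2.2, w.2.1) := by fun_prop
    exact (((hq.comp (by fun_prop : Measurable fun w : ℝ × ℝ × R => (w.2.2, w.1))).div
      (measurable_setIntegral_Ioi hq (by fun_prop) (by fun_prop))).ennreal_ofReal).mul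
        ((hq.comp hswap).ennreal_ofReal.mul (hS.comp hswap))
  calc ∫⁻ Y, ENNReal.ofReal (q (r Y) (x Y)) * g (survivalRatio (q (r Y)) (m (r Y)) (x Y)) ∂μ
    _ = ∫⁻ Y, (∫⁻ z in Set.Ioi (m (r Y)), f (z, x Y, r Y)) ∂μ := by
        refine lintegral_congr fun Y => ?_
        simp only [f]
        rw [lintegral_mul_const _ ((hcont Y).measurable.div_const _).ennreal_ofReal,
          lintegral_ofReal_div_setIntegral_Ioi (hcont Y) (hint Y) (hpos Y), one_mul]
    _ = ∫⁻ Y, (∫⁻ z in Set.Ioi (m (r Y)), f (x Y, z, r Y)) ∂μ := h.lintegral_swap hx hr hm hf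
    _ = ∫⁻ Y, ENNReal.ofReal (q (r Y) (x Y)) * (∫⁻ u in Set.Ioo 0 1, g u) ∂μ := by
        refine lintegral_congr fun Y => ?_
        have hSY : Measurable fun z =>
            ENNReal.ofReal (q (r Y) z / Z (r Y)) * g (survivalRatio (q (r Y)) (m (r Y)) z) :=
          ((hcont Y).measurable.div_const _).ennreal_ofReal.mul (hS.comp measurable_prodMk_left)
        rw [← lintegral_survivalRatio (hcont Y) (hint Y) (hpos Y) g,
          ← lintegral_const_mul _ hSY]
        refine lintegral_congr fun z => ?_
        simp only [f, Z, ENNReal.ofReal_div_of_pos (setIntegral_Ioi_pos (hint Y) (hpos Y))]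
        simp only [div_eq_mul_inv]
        ring
    _ = (∫⁻ Y, ENNReal.ofReal (q (r Y) (x Y)) ∂μ) * ∫⁻ u in Set.Ioo 0 1, g u :=
        lintegral_mul_const _ (hq.comp (hr.prodMk hx)).ennreal_ofReal

theorem IsShiftInvariant.map_survivalRatio_withDensity (h : IsShiftInvariant μ x r m)
    (hx : Measurable x) (hr : Measurable r) (hm : Measurable m)
    (hq : Measurable (Function.uncurry q)) (hcont : ∀ Y, Continuous (q (r Y)))
    (hint : ∀ Y, IntegrableOn (q (r Y)) (Set.Ioi (m (r Y))))
    (hpos : ∀ Y z, m (r Y) < z → 0 < q (r Y) z) :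
    Measure.map (fun Y => survivalRatio (q (r Y)) (m (r Y)) (x Y))
        (μ.withDensity fun Y => ENNReal.ofReal (q (r Y) (x Y))) =
      (∫⁻ Y, ENNReal.ofReal (q (r Y) (x Y)) ∂μ) • volume.restrict (Set.Ioo 0 1) := by
  have hS : Measurable fun Y => survivalRatio (q (r Y)) (m (r Y)) (x Y) :=
    (measurable_survivalRatio hm hq).comp (hr.prodMk hx)
  refine Measure.ext_of_lintegral _ fun g hg => ?_
  rw [lintegral_map hg hS, lintegral_smul_measure, smul_eq_mul,
    ← h.lintegral_mul_survivalRatio hx hr hm hq hcont hint hpos hg]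
  exact lintegral_withDensity_eq_lintegral_mul _ (hq.comp (hr.prodMk hx)).ennreal_ofReal
    (hg.comp hS)

end ShiftInvariance

section SingularValueDecomposition

variable {m κ ρ : Type*}

theorem transpose_mul_self_of_orthonormal {ι : Type*} [Fintype m] [DecidableEq ι]
    {v : ι → EuclideanSpace ℝ m} (hv : Orthonormal ℝ v) :
    (of fun i k => v k i)ᵀ * of (fun i k => v k i) = (1 : Matrix ι ι ℝ) := by
  ext i j
  rw [one_apply, ← orthonormal_iff_ite.mp hv i j, PiLp.inner_apply]
  simp [mul_apply, mul_comm]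

theorem exists_orthonormalBasis_apply_eq_singularValues_smul {E F : Type*}
    [NormedAddCommGroup E] [InnerProductSpace ℝ E] [FiniteDimensional ℝ E]
    [NormedAddCommGroup F] [InnerProductSpace ℝ F] [FiniteDimensional ℝ F] [Fintype ρ]
    {p : ℕ} (A : E →ₗ[ℝ] F) (hE : Module.finrank ℝ E = p)
    (hF : Module.finrank ℝ F = p + Fintype.card ρ) :
    ∃ (v : OrthonormalBasis (Fin p) ℝ E) (b : OrthonormalBasis (Fin p ⊕ ρ) ℝ F),
      ∀ j, A (v j) = A.singularValues j • b (Sum.inl j) := by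
  let s (i : Fin p) : ℝ := A.singularValues i
  have hT := A.isSymmetric_adjoint_comp_self
  let v := hT.eigenvectorBasis hE
  have inner_apply (i j) : inner ℝ (A (v i)) (A (v j)) = if i = j then s j ^ 2 else 0 := by
    have hvj : LinearMap.adjoint A (A (v j)) = (s j ^ 2) • v j :=
      (hT.apply_eigenvectorBasis hE j).trans (by rw [← A.sq_singularValues_fin hE j]; rfl)
    rw [← LinearMap.adjoint_inner_right, hvj, inner_smul_right,
      orthonormal_iff_ite.mp v.orthonormal]
    simp
  let w : Fin p ⊕ ρ → F := Sum.elim (fun i => (s i)⁻¹ • A (v i)) 0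
  let S : Set (Fin p ⊕ ρ) := {x | ∃ i, x = Sum.inl i ∧ s i ≠ 0}
  have hw : Orthonormal ℝ (S.domRestrict w) := by
    classical
    rw [orthonormal_iff_ite]
    rintro ⟨_, i, rfl, hi⟩ ⟨_, j, rfl, hj⟩
    simp only [Set.domRestrict_apply, w, Sum.elim_inl, inner_smul_left, inner_smul_right,
      inner_apply]
    by_cases hij : i = j
    · subst hij
      simp
      field_simp
    · simp [hij]
  obtain ⟨b, hb⟩ := hw.exists_orthonormalBasis_extension_of_card_eq (by simp [hF])
  refine ⟨v, b, fun j => ?_⟩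
  change A (v j) = s j • b (Sum.inl j)
  by_cases hj : s j = 0
  · have hAv : A (v j) = 0 := by simpa [hj] using inner_apply j j
    rw [hAv, hj, zero_smul]
  · rw [hb _ ⟨j, rfl, hj⟩]
    simp [w, smul_smul, hj]

/-- `A = U D Vᵀ` is a singular value decomposition with singular values `s`, in no particular
order. Both `U` and `V` are orthogonal; the columns of `U` beyond those paired with columns
of `V` are indexed by `ρ`. -/
structure IsSVD [Fintype m] [Fintype κ] [DecidableEq m] [DecidableEq κ] [DecidableEq ρ] [Fintype ρ]
    (A : Matrix m κ ℝ) (s : κ → ℝ) (U : Matrix m (κ ⊕ ρ) ℝ) (V : Matrix κ κ ℝ) : Prop where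
  eq : A = U.toCols₁ * diagonal s * Vᵀ
  transpose_mul_left : Uᵀ * U = 1
  mul_transpose_left : U * Uᵀ = 1
  transpose_mul_right : Vᵀ * V = 1
  mul_transpose_right : V * Vᵀ = 1

/-- The singular values of a matrix with `p` columns, in decreasing order and repeated according
to multiplicity. There are always `p` of them, padded by zeros for a matrix with fewer rows. -/
noncomputable def singularValues {p : ℕ} [Fintype m] (A : Matrix m (Fin p) ℝ) (i : Fin p) : ℝ :=
  A.toEuclideanLin.singularValues i

theorem singularValues_nonneg {p : ℕ} [Fintype m] (A : Matrix m (Fin p) ℝ) (i : Fin p) :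
    0 ≤ singularValues A i :=
  LinearMap.singularValues_nonneg _ _

theorem singularValues_antitone {p : ℕ} [Fintype m] (A : Matrix m (Fin p) ℝ) :
    Antitone (singularValues A) :=
  fun _ _ h => LinearMap.singularValues_antitone _ h

theorem exists_isSVD {p : ℕ} [Fintype m] [DecidableEq m] [Fintype ρ] [DecidableEq ρ]
    (hm : Fintype.card m = p + Fintype.card ρ) (A : Matrix m (Fin p) ℝ) :
    ∃ (U : Matrix m (Fin p ⊕ ρ) ℝ) (V : Matrix (Fin p) (Fin p) ℝ),
      IsSVD A (singularValues A) U V := by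
  obtain ⟨v, b, hvb⟩ := exists_orthonormalBasis_apply_eq_singularValues_smul (p := p) (ρ := ρ)
    A.toEuclideanLin (by simp) (by simpa using hm)
  let U : Matrix m (Fin p ⊕ ρ) ℝ := of fun i k => b k i
  let V : Matrix (Fin p) (Fin p) ℝ := of fun i k => v k i
  have hU : Uᵀ * U = 1 := transpose_mul_self_of_orthonormal b.orthonormal
  have hV : Vᵀ * V = 1 := transpose_mul_self_of_orthonormal v.orthonormal
  have hAV : A * V = U.toCols₁ * diagonal (singularValues A) := by
    ext i j
    have := congrArg (fun x => x.ofLp i) (hvb j)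
    simp only [ofLp_toLpLin, toLin'_apply, PiLp.smul_apply, smul_eq_mul] at this
    rw [mul_diagonal, mul_comm]
    exact this
  refine ⟨U, V, ?_, hU, (mul_eq_one_comm_of_card_eq _ _ _ (by simpa using hm.symm)).mp hU, hV,
    mul_eq_one_comm.mp hV⟩
  rw [← hAV, Matrix.mul_assoc, mul_eq_one_comm.mp hV, Matrix.mul_one]

theorem transpose_mul_self_svd [Fintype m] [Fintype κ] [DecidableEq κ] {U : Matrix m κ ℝ}
    (hU : Uᵀ * U = 1) (s : κ → ℝ) (V : Matrix κ κ ℝ) :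
    (U * diagonal s * Vᵀ)ᵀ * (U * diagonal s * Vᵀ) = V * diagonal (fun i => s i ^ 2) * Vᵀ := by
  calc (U * diagonal s * Vᵀ)ᵀ * (U * diagonal s * Vᵀ)
      = V * (diagonal s * (Uᵀ * U) * diagonal s) * Vᵀ := by
        simp only [transpose_mul, transpose_transpose, diagonal_transpose, Matrix.mul_assoc]
    _ = V * diagonal (fun i => s i ^ 2) * Vᵀ := by
        rw [hU, Matrix.mul_one, diagonal_mul_diagonal]
        simp only [sq]

theorem charpoly_transpose_mul_self_svd [Fintype m] [Fintype κ] [DecidableEq κ]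
    {U : Matrix m κ ℝ} {V : Matrix κ κ ℝ} (hU : Uᵀ * U = 1) (hV : Vᵀ * V = 1) (s : κ → ℝ) :
    ((U * diagonal s * Vᵀ)ᵀ * (U * diagonal s * Vᵀ)).charpoly =
      ∏ i, (Polynomial.X - Polynomial.C (s i ^ 2)) := by
  rw [transpose_mul_self_svd hU, Matrix.mul_assoc, charpoly_mul_comm, Matrix.mul_assoc, hV,
    Matrix.mul_one, charpoly_diagonal]

theorem transpose_toCols₁_mul_toCols₁ [Fintype m] [DecidableEq κ] [DecidableEq ρ]
    {U : Matrix m (κ ⊕ ρ) ℝ} (hU : Uᵀ * U = 1) : U.toCols₁ᵀ * U.toCols₁ = 1 := by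
  ext i j
  have hij := congrFun (congrFun hU (Sum.inl i)) (Sum.inl j)
  simpa [one_apply, mul_apply] using hij

theorem toCols₁_eq_mul_fromRows [Fintype κ] [Fintype ρ] [DecidableEq κ] (U : Matrix m (κ ⊕ ρ) ℝ) :
    U.toCols₁ = U * (fromRows 1 0 : Matrix (κ ⊕ ρ) κ ℝ) := by
  conv_rhs => rw [← U.fromCols_toCols, fromCols_mul_fromRows]
  simp

theorem dotProduct_mulVec_self {ι : Type*} [Fintype m] [DecidableEq m] [Fintype ι]
    {W : Matrix ι m ℝ} (hW : Wᵀ * W = 1) (u : m → ℝ) : (W *ᵥ u) ⬝ᵥ (W *ᵥ u) = u ⬝ᵥ u := by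
  rw [Matrix.dotProduct_mulVec, ← mulVec_transpose, mulVec_mulVec, hW, one_mulVec]

theorem col_dotProduct_col {ι : Type*} [Fintype m] [DecidableEq ι] {W : Matrix m ι ℝ}
    (hW : Wᵀ * W = 1) (i j : ι) : W.col i ⬝ᵥ W.col j = if i = j then 1 else 0 := by
  rw [← one_apply, ← hW]
  rfl

/-- The rectangular diagonal matrix `D` of a singular value decomposition `Y = U D Vᵀ`, with the
zero rows indexed by `ρ`, as an element of the space of functions `κ ⊕ ρ → κ → ℝ`. -/
def rectDiagonal [DecidableEq κ] (s : κ → ℝ) : κ ⊕ ρ → κ → ℝ :=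
  Sum.elim (fun j => Pi.single j (s j)) 0

section IsSVD

variable [Fintype m] [Fintype κ] [Fintype ρ] [DecidableEq m] [DecidableEq κ] [DecidableEq ρ]
  {A : Matrix m κ ℝ} {s : κ → ℝ} {U : Matrix m (κ ⊕ ρ) ℝ} {V : Matrix κ κ ℝ}

theorem IsSVD.charpoly_transpose_mul_self (h : IsSVD A s U V) :
    (Aᵀ * A).charpoly = ∏ i, (Polynomial.X - Polynomial.C (s i ^ 2)) := by
  rw [h.eq]
  exact charpoly_transpose_mul_self_svd (transpose_toCols₁_mul_toCols₁ h.transpose_mul_left)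
    h.transpose_mul_right s

theorem IsSVD.sum_sq_eq (h : IsSVD A s U V) : ∑ i, ∑ j, A i j ^ 2 = ∑ k, s k ^ 2 := by
  calc ∑ i, ∑ j, A i j ^ 2 = (Aᵀ * A).trace := by
        simp only [trace, diag, mul_apply, transpose_apply, sq]
        exact Finset.sum_comm
    _ = (V * diagonal (fun k => s k ^ 2) * Vᵀ).trace := by
        rw [h.eq, transpose_mul_self_svd (transpose_toCols₁_mul_toCols₁ h.transpose_mul_left)]
    _ = ∑ k, s k ^ 2 := by
        rw [trace_mul_comm, ← Matrix.mul_assoc, h.transpose_mul_right, Matrix.one_mul,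
          trace_diagonal]

theorem IsSVD.rotate_eq (h : IsSVD A s U V) : Uᵀ * A * V = of (rectDiagonal s) := by
  calc Uᵀ * A * V
      = (Uᵀ * U) * ((fromRows 1 0 : Matrix (κ ⊕ ρ) κ ℝ) * diagonal s) * (Vᵀ * V) := by
        rw [h.eq, toCols₁_eq_mul_fromRows]
        simp only [Matrix.mul_assoc]
    _ = fromRows (diagonal s) 0 := by
        rw [h.transpose_mul_left, h.transpose_mul_right, fromRows_mul]
        simp
    _ = of (rectDiagonal s) := by
        ext (i | r) j
        · simp [rectDiagonal, diagonal_apply, Pi.single_apply, eq_comm]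
        · rfl

theorem IsSVD.dotProduct_mulVec (h : IsSVD A s U V) (u : m → ℝ) (v : κ → ℝ) :
    u ⬝ᵥ A *ᵥ v = ∑ k, s k * ((Uᵀ *ᵥ u) (Sum.inl k) * (Vᵀ *ᵥ v) k) := by
  rw [h.eq, ← mulVec_mulVec, ← mulVec_mulVec, Matrix.dotProduct_mulVec, ← mulVec_transpose]
  simp only [dotProduct, mulVec_diagonal]
  refine Finset.sum_congr rfl fun k _ => ?_
  change (Uᵀ *ᵥ u) (Sum.inl k) * _ = _
  ring

theorem IsSVD.two_mul_dotProduct_mulVec_le (h : IsSVD A s U V) {c : ℝ} (hc : 0 ≤ c)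
    (hs : ∀ k, |s k| ≤ c) (u : m → ℝ) (v : κ → ℝ) :
    2 * (u ⬝ᵥ A *ᵥ v) ≤ c * (u ⬝ᵥ u + v ⬝ᵥ v) := by
  set a := Uᵀ *ᵥ u
  set b := Vᵀ *ᵥ v
  have ha : u ⬝ᵥ u = ∑ k, a (Sum.inl k) ^ 2 + ∑ r, a (Sum.inr r) ^ 2 := by
    rw [← dotProduct_mulVec_self (W := Uᵀ) h.mul_transpose_left]
    simp [dotProduct, sq, a]
  have hb : v ⬝ᵥ v = ∑ k, b k ^ 2 := by
    rw [← dotProduct_mulVec_self (W := Vᵀ) h.mul_transpose_right]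
    simp [dotProduct, sq, b]
  have term_le (k) : 2 * (s k * (a (Sum.inl k) * b k)) ≤ c * (a (Sum.inl k) ^ 2 + b k ^ 2) := by
    have hsk := abs_le.mp (hs k)
    nlinarith [sq_nonneg (a (Sum.inl k) - b k), sq_nonneg (a (Sum.inl k) + b k)]
  calc 2 * (u ⬝ᵥ A *ᵥ v) ≤ ∑ k, c * (a (Sum.inl k) ^ 2 + b k ^ 2) := by
        rw [h.dotProduct_mulVec, Finset.mul_sum]
        exact Finset.sum_le_sum fun k _ => term_le k
    _ = c * (∑ k, a (Sum.inl k) ^ 2 + ∑ k, b k ^ 2) := by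
        rw [← Finset.mul_sum, Finset.sum_add_distrib]
    _ ≤ c * (u ⬝ᵥ u + v ⬝ᵥ v) := by
        rw [ha, hb]
        gcongr
        exact le_add_of_nonneg_right (by positivity)

theorem IsSVD.add_smul_vecMulVec (h : IsSVD A s U V) (k : κ) (t : ℝ) :
    IsSVD (A + t • vecMulVec (U.col (Sum.inl k)) (V.col k))
      (Function.update s k (s k + t)) U V := by
  refine ⟨?_, h.transpose_mul_left, h.mul_transpose_left, h.transpose_mul_right,
    h.mul_transpose_right⟩
  have hupdate : diagonal (Function.update s k (s k + t)) =
      diagonal s + t • vecMulVec (Pi.single k 1) (Pi.single k 1) := by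
    ext i j
    rcases eq_or_ne i j with rfl | hij
    · rcases eq_or_ne i k with rfl | hik
      · simp [vecMulVec_apply]
      · simp [vecMulVec_apply, hik]
    · rcases eq_or_ne i k with rfl | hik
      · simp [vecMulVec_apply, hij, hij.symm]
      · simp [vecMulVec_apply, hij, hik]
  have hrank_one : U.toCols₁ * vecMulVec (Pi.single k (1 : ℝ)) (Pi.single k 1) * Vᵀ =
      vecMulVec (U.col (Sum.inl k)) (V.col k) := by
    rw [mul_vecMulVec, vecMulVec_mul, mulVec_single_one, vecMul_transpose, mulVec_single_one]
    rfl
  rw [hupdate, Matrix.mul_add, Matrix.add_mul, ← h.eq, ← hrank_one]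
  simp

end IsSVD

end SingularValueDecomposition

section SingularPair

/-- `u` and `v` are unit left and right singular vectors of `A` for the singular value `τ`. -/
structure IsSingularPair {m κ : Type*} [Fintype m] [Fintype κ]
    (A : Matrix m κ ℝ) (τ : ℝ) (u : m → ℝ) (v : κ → ℝ) : Prop where
  mulVec_eq : A *ᵥ v = τ • u
  transpose_mulVec_eq : Aᵀ *ᵥ u = τ • v
  left_unit : u ⬝ᵥ u = 1
  right_unit : v ⬝ᵥ v = 1

variable {m κ ρ : Type*} [Fintype m] [Fintype κ] {A : Matrix m κ ℝ} {τ : ℝ} {u : m → ℝ} {v : κ → ℝ}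

theorem IsSingularPair.dotProduct_mulVec_eq (h : IsSingularPair A τ u v) : u ⬝ᵥ A *ᵥ v = τ := by
  rw [h.mulVec_eq, dotProduct_smul, h.left_unit, smul_eq_mul, mul_one]

theorem IsSingularPair.rotate [DecidableEq m] [DecidableEq κ] {m' κ' : Type*} [Fintype m']
    [Fintype κ'] {U : Matrix m m' ℝ} {V : Matrix κ κ' ℝ} (hU : U * Uᵀ = 1) (hV : V * Vᵀ = 1)
    (h : IsSingularPair A τ u v) : IsSingularPair (Uᵀ * A * V) τ (Uᵀ *ᵥ u) (Vᵀ *ᵥ v) where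
  mulVec_eq := by
    rw [mulVec_mulVec, Matrix.mul_assoc, hV, Matrix.mul_one, ← mulVec_mulVec, h.mulVec_eq,
      mulVec_smul]
  transpose_mulVec_eq := by
    rw [transpose_mul, transpose_mul, transpose_transpose, mulVec_mulVec, Matrix.mul_assoc,
      Matrix.mul_assoc, hU, Matrix.mul_one, ← mulVec_mulVec, h.transpose_mulVec_eq, mulVec_smul]
  left_unit := (dotProduct_mulVec_self hU u).trans h.left_unit
  right_unit := (dotProduct_mulVec_self hV v).trans h.right_unit

theorem IsSVD.isSingularPair [DecidableEq m] [DecidableEq κ] [Fintype ρ] [DecidableEq ρ]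
    {s : κ → ℝ} {U : Matrix m (κ ⊕ ρ) ℝ} {V : Matrix κ κ ℝ} (h : IsSVD A s U V) (k : κ) :
    IsSingularPair A (s k) (U.col (Sum.inl k)) (V.col k) where
  mulVec_eq := by
    rw [← mulVec_single_one V, mulVec_mulVec, h.eq, Matrix.mul_assoc _ Vᵀ, h.transpose_mul_right,
      Matrix.mul_one, ← mulVec_mulVec, diagonal_mulVec_single, mul_one, mulVec_single]
    ext i
    simp [toCols₁, mul_comm]
  transpose_mulVec_eq := by
    have hU := transpose_toCols₁_mul_toCols₁ h.transpose_mul_left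
    change Aᵀ *ᵥ U.toCols₁.col k = _
    rw [← mulVec_single_one U.toCols₁, mulVec_mulVec, h.eq, transpose_mul, transpose_mul,
      transpose_transpose, diagonal_transpose, Matrix.mul_assoc, Matrix.mul_assoc, hU,
      Matrix.mul_one, ← mulVec_mulVec, diagonal_mulVec_single, mul_one, mulVec_single]
    ext i
    simp [mul_comm]
  left_unit := (col_dotProduct_col h.transpose_mul_left _ _).trans (if_pos rfl)
  right_unit := (col_dotProduct_col h.transpose_mul_right _ _).trans (if_pos rfl)

end SingularPair

section SingularValues

variable {m : Type*} [Fintype m] {p n : ℕ}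

theorem eq_of_prod_X_sub_C_sq_eq {s t : Fin p → ℝ} (hs : Antitone s) (hs₀ : ∀ i, 0 ≤ s i)
    (ht : Antitone t) (ht₀ : ∀ i, 0 ≤ t i)
    (h : ∏ i, (Polynomial.X - Polynomial.C (s i ^ 2)) =
      ∏ i, (Polynomial.X - Polynomial.C (t i ^ 2))) : s = t := by
  have roots_prod (r : Fin p → ℝ) : (∏ i, (Polynomial.X - Polynomial.C (r i ^ 2))).roots =
      (List.ofFn (fun i => r i ^ 2) : Multiset ℝ) := by
    rw [← Polynomial.roots_multiset_prod_X_sub_C (List.ofFn (fun i => r i ^ 2) : Multiset ℝ)]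
    simp [Multiset.map_coe, List.map_ofFn, List.prod_ofFn]
  have sorted (r : Fin p → ℝ) (hr : Antitone r) (hr₀ : ∀ i, 0 ≤ r i) :
      (List.ofFn fun i => r i ^ 2).SortedGE :=
    Antitone.sortedGE_ofFn fun _ _ hij => pow_le_pow_left₀ (hr₀ _) (hr hij) 2
  have hperm := congrArg Polynomial.roots h
  rw [roots_prod, roots_prod, Multiset.coe_eq_coe] at hperm
  have hsq := List.ofFn_injective (hperm.eq_of_sortedGE (sorted s hs hs₀) (sorted t ht ht₀))
  ext i
  exact (pow_left_inj₀ (hs₀ i) (ht₀ i) two_ne_zero).mp (congrFun hsq i)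

theorem exists_isSVD_of_le_card [DecidableEq m] (hm : p ≤ Fintype.card m)
    (A : Matrix m (Fin p) ℝ) :
    ∃ (U : Matrix m (Fin p ⊕ Fin (Fintype.card m - p)) ℝ) (V : Matrix (Fin p) (Fin p) ℝ),
      IsSVD A (singularValues A) U V :=
  exists_isSVD (by simp [hm]) A

theorem eq_singularValues_iff (hm : p ≤ Fintype.card m) (A : Matrix m (Fin p) ℝ)
    (s : Fin p → ℝ) : s = singularValues A ↔ Antitone s ∧ (∀ i, 0 ≤ s i) ∧
      (Aᵀ * A).charpoly = ∏ i, (Polynomial.X - Polynomial.C (s i ^ 2)) := by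
  classical
  obtain ⟨U, V, hA⟩ := exists_isSVD_of_le_card hm A
  constructor
  · rintro rfl
    exact ⟨singularValues_antitone A, singularValues_nonneg A, hA.charpoly_transpose_mul_self⟩
  · rintro ⟨hs, hs₀, hchar⟩
    exact eq_of_prod_X_sub_C_sq_eq hs hs₀ (singularValues_antitone A) (singularValues_nonneg A)
      (hchar.symm.trans hA.charpoly_transpose_mul_self)

theorem isClosed_graph_singularValues (hm : p ≤ Fintype.card m) :
    IsClosed {q : (m → Fin p → ℝ) × (Fin p → ℝ) | q.2 = singularValues (of q.1)} := by
  have hgraph : {q : (m → Fin p → ℝ) × (Fin p → ℝ) | q.2 = singularValues (of q.1)} =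
      (⋂ i, ⋂ j, ⋂ _ : i ≤ j, {q | q.2 j ≤ q.2 i}) ∩ (⋂ i, {q | 0 ≤ q.2 i}) ∩
        ⋂ z : ℝ, {q | (scalar (Fin p) z - (of q.1)ᵀ * of q.1).det = ∏ i, (z - q.2 i ^ 2)} := by
    ext q
    have hchar : ((of q.1)ᵀ * of q.1).charpoly = ∏ i, (Polynomial.X - Polynomial.C (q.2 i ^ 2)) ↔
        ∀ z : ℝ, (scalar (Fin p) z - (of q.1)ᵀ * of q.1).det = ∏ i, (z - q.2 i ^ 2) := by
      simp only [← eval_charpoly]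
      refine ⟨fun h z => by simp [h, Polynomial.eval_prod], fun h => Polynomial.funext fun z => ?_⟩
      simp [h, Polynomial.eval_prod]
    simp only [Set.mem_ofPred_eq, eq_singularValues_iff hm, hchar, Set.mem_inter_iff,
      Set.mem_iInter, Antitone, and_assoc]
  rw [hgraph]
  refine ((isClosed_iInter fun i => isClosed_iInter fun j => isClosed_iInter fun _ =>
    isClosed_le (by fun_prop) (by fun_prop)).inter
      (isClosed_iInter fun i => isClosed_le (by fun_prop) (by fun_prop))).inter
        (isClosed_iInter fun z => isClosed_eq ?_ (by fun_prop))
  have hof : Continuous fun q : (m → Fin p → ℝ) × (Fin p → ℝ) =>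
    (of q.1 : Matrix m (Fin p) ℝ) := continuous_fst
  exact (continuous_const.sub (hof.matrix_transpose.matrix_mul hof)).matrix_det

theorem measurable_of_measurableSet_graph {X Z : Type*} [MeasurableSpace X] [StandardBorelSpace X]
    [MeasurableSpace Z] [StandardBorelSpace Z] {f : X → Z}
    (hf : MeasurableSet {q : X × Z | q.2 = f q.1}) : Measurable f := by
  intro B hB
  have hpre : f ⁻¹' B = Prod.fst '' ({q : X × Z | q.2 = f q.1} ∩ Prod.snd ⁻¹' B) := by
    ext x
    simp
  rw [hpre]
  refine (hf.inter (measurable_snd hB)).image_of_measurable_injOn measurable_fst ?_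
  rintro ⟨x, y⟩ ⟨hy : y = f x, _⟩ ⟨x', y'⟩ ⟨hy' : y' = f x', _⟩ (rfl : x = x')
  rw [hy, hy']

theorem measurable_singularValues (hm : p ≤ Fintype.card m) :
    Measurable fun Y : m → Fin p → ℝ => singularValues (of Y) :=
  measurable_of_measurableSet_graph (isClosed_graph_singularValues hm).measurableSet

theorem sum_sq_eq_sum_sq_singularValues (hm : p ≤ Fintype.card m) (A : Matrix m (Fin p) ℝ) :
    ∑ i, ∑ j, A i j ^ 2 = ∑ k, singularValues A k ^ 2 := by
  classical
  obtain ⟨U, V, hA⟩ := exists_isSVD_of_le_card hm A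
  exact hA.sum_sq_eq

theorem eq_singularValues_of_thin_svd (hm : p ≤ Fintype.card m) {s : Fin p → ℝ}
    {U : Matrix m (Fin p) ℝ} {V : Matrix (Fin p) (Fin p) ℝ} (hU : Uᵀ * U = 1) (hV : Vᵀ * V = 1)
    (hs : Antitone s) (hs₀ : ∀ i, 0 ≤ s i) : s = singularValues (U * diagonal s * Vᵀ) :=
  (eq_singularValues_iff hm _ s).mpr ⟨hs, hs₀, charpoly_transpose_mul_self_svd hU hV s⟩

theorem dotProduct_mulVec_le_singularValues_zero (hm : n + 1 ≤ Fintype.card m)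
    (A : Matrix m (Fin (n + 1)) ℝ) {u : m → ℝ} {v : Fin (n + 1) → ℝ} (hu : u ⬝ᵥ u = 1)
    (hv : v ⬝ᵥ v = 1) : u ⬝ᵥ A *ᵥ v ≤ singularValues A 0 := by
  classical
  obtain ⟨U, V, hA⟩ := exists_isSVD_of_le_card hm A
  have hle := hA.two_mul_dotProduct_mulVec_le (singularValues_nonneg A 0) (fun k => by
    rw [abs_of_nonneg (singularValues_nonneg A k)]
    exact singularValues_antitone A (Fin.zero_le k)) u v
  rw [hu, hv] at hle
  linarith

theorem exists_isSingularPair (hm : p ≤ Fintype.card m) (A : Matrix m (Fin p) ℝ) (k : Fin p) :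
    ∃ u v, IsSingularPair A (singularValues A k) u v := by
  classical
  obtain ⟨U, V, hA⟩ := exists_isSVD_of_le_card hm A
  exact ⟨_, _, hA.isSingularPair k⟩

theorem abs_le_one_of_dotProduct_self_eq_one {ι : Type*} [Fintype ι] {u : ι → ℝ}
    (hu : u ⬝ᵥ u = 1) (i : ι) : |u i| ≤ 1 := by
  rw [← sq_le_one_iff_abs_le_one, ← hu, sq]
  exact Finset.single_le_sum (f := fun i => u i * u i) (fun _ _ => mul_self_nonneg _)
    (Finset.mem_univ i)

theorem dotProduct_mulVec_le_card_mul_norm {κ : Type*} [Fintype κ] (H : m → κ → ℝ) {u : m → ℝ}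
    {v : κ → ℝ} (hu : u ⬝ᵥ u = 1) (hv : v ⬝ᵥ v = 1) :
    u ⬝ᵥ of H *ᵥ v ≤ Fintype.card m * Fintype.card κ * ‖H‖ := by
  have term_le (i j) : u i * (H i j * v j) ≤ ‖H‖ := by
    have hH : |H i j| ≤ ‖H‖ := (norm_le_pi_norm (H i) j).trans (norm_le_pi_norm H i)
    calc u i * (H i j * v j) ≤ |u i| * (|H i j| * |v j|) := by
          rw [← abs_mul, ← abs_mul]
          exact le_abs_self _
      _ ≤ 1 * (‖H‖ * 1) := by
          gcongr
          exacts [abs_le_one_of_dotProduct_self_eq_one hu i,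
            abs_le_one_of_dotProduct_self_eq_one hv j]
      _ = ‖H‖ := by ring
  calc u ⬝ᵥ of H *ᵥ v = ∑ i, ∑ j, u i * (H i j * v j) := by
        simp only [dotProduct, mulVec, Finset.mul_sum, of_apply]
    _ ≤ ∑ _i : m, ∑ _j : κ, ‖H‖ :=
        Finset.sum_le_sum fun i _ => Finset.sum_le_sum fun j _ => term_le i j
    _ = Fintype.card m * Fintype.card κ * ‖H‖ := by
        simp [mul_assoc]

theorem lipschitzWith_singularValues_zero (hm : n + 1 ≤ Fintype.card m) :
    LipschitzWith (Fintype.card m * Fintype.card (Fin (n + 1)))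
      fun Y : m → Fin (n + 1) → ℝ => singularValues (of Y) 0 := by
  refine LipschitzWith.of_le_add_mul _ fun X Y => ?_
  obtain ⟨u, v, huv⟩ := exists_isSingularPair hm (of X) 0
  calc singularValues (of X) 0 = u ⬝ᵥ of Y *ᵥ v + u ⬝ᵥ of (X - Y) *ᵥ v := by
        rw [← dotProduct_add, ← add_mulVec, ← huv.dotProduct_mulVec_eq]
        congr 2
        ext i j
        simp
    _ ≤ singularValues (of Y) 0 + Fintype.card m * Fintype.card (Fin (n + 1)) * ‖X - Y‖ :=
        add_le_add (dotProduct_mulVec_le_singularValues_zero hm _ huv.left_unit huv.right_unit)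
          (dotProduct_mulVec_le_card_mul_norm _ huv.left_unit huv.right_unit)
    _ = _ := by
        rw [dist_eq_norm]
        push_cast
        rfl

/-- A maximizer `(u, v)` of the bilinear form of `Y` makes `X ↦ u ⬝ᵥ X *ᵥ v` touch the top singular
value from below at `Y`, so the two have the same derivative there. -/
theorem hasFDerivAt_singularValues_zero_apply (hm : n + 1 ≤ Fintype.card m)
    {Y : m → Fin (n + 1) → ℝ} {f' : (m → Fin (n + 1) → ℝ) →L[ℝ] ℝ}
    (hf : HasFDerivAt (fun X => singularValues (of X) 0) f' Y) {u : m → ℝ} {v : Fin (n + 1) → ℝ}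
    (hu : u ⬝ᵥ u = 1) (hv : v ⬝ᵥ v = 1) (hY : u ⬝ᵥ of Y *ᵥ v = singularValues (of Y) 0)
    (H : m → Fin (n + 1) → ℝ) : f' H = u ⬝ᵥ of H *ᵥ v := by
  let g : (m → Fin (n + 1) → ℝ) →ₗ[ℝ] ℝ :=
    { toFun := fun X => u ⬝ᵥ of X *ᵥ v
      map_add' := fun X Z => by rw [← dotProduct_add, ← add_mulVec]; rfl
      map_smul' := fun c X => by
        rw [RingHom.id_apply, ← dotProduct_smul, ← smul_mulVec]; rfl }
  have hmin : IsLocalMin (fun X => singularValues (of X) 0 - g.toContinuousLinearMap X) Y := by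
    refine Filter.Eventually.of_forall fun X => ?_
    change singularValues (of Y) 0 - u ⬝ᵥ of Y *ᵥ v ≤ singularValues (of X) 0 - u ⬝ᵥ of X *ᵥ v
    rw [hY, sub_self, sub_nonneg]
    exact dotProduct_mulVec_le_singularValues_zero hm _ hu hv
  have hzero := hmin.hasFDerivAt_eq_zero (hf.sub g.toContinuousLinearMap.hasFDerivAt)
  exact sub_eq_zero.mp (congrArg (fun F : (m → Fin (n + 1) → ℝ) →L[ℝ] ℝ => F H) hzero)

theorem ae_singularValues_zero_pos_and_succ_lt (hm : n + 1 ≤ Fintype.card m) :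
    ∀ᵐ Y : m → Fin (n + 1) → ℝ, 0 < singularValues (of Y) 0 ∧
      ∀ j : Fin n, singularValues (of Y) j.succ < singularValues (of Y) 0 := by
  classical
  filter_upwards [(lipschitzWith_singularValues_zero hm).ae_differentiableAt] with Y hY
  obtain ⟨U, V, hSVD⟩ := exists_isSVD_of_le_card hm (of Y)
  let u (k : Fin (n + 1)) := U.col (Sum.inl k)
  let v (k : Fin (n + 1)) := V.col k
  have pair (k) : IsSingularPair (of Y) (singularValues (of Y) k) (u k) (v k) :=
    hSVD.isSingularPair k
  have apply_top {a : m → ℝ} {b : Fin (n + 1) → ℝ} (ha : a ⬝ᵥ a = 1) (hb : b ⬝ᵥ b = 1)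
      (hab : a ⬝ᵥ of Y *ᵥ b = singularValues (of Y) 0) :
      fderiv ℝ (fun X => singularValues (of X) 0) Y (fun i j => u 0 i * v 0 j) =
        (a ⬝ᵥ u 0) * (v 0 ⬝ᵥ b) := by
    rw [hasFDerivAt_singularValues_zero_apply hm hY.hasFDerivAt ha hb hab]
    change a ⬝ᵥ vecMulVec (u 0) (v 0) *ᵥ b = _
    rw [vecMulVec_mulVec, op_smul_eq_smul, dotProduct_smul, smul_eq_mul, mul_comm]
  have deriv_one := apply_top (pair 0).left_unit (pair 0).right_unit (pair 0).dotProduct_mulVec_eq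
  rw [(pair 0).left_unit, (pair 0).right_unit, one_mul] at deriv_one
  refine ⟨(singularValues_nonneg _ 0).lt_of_ne fun hzero => ?_,
    fun j => (singularValues_antitone _ (Fin.zero_le _)).lt_of_ne fun heq => ?_⟩
  · have deriv_neg_one := apply_top (a := -u 0) (by simp [(pair 0).left_unit])
      (pair 0).right_unit (by rw [neg_dotProduct, (pair 0).dotProduct_mulVec_eq, ← hzero, neg_zero])
    rw [neg_dotProduct, (pair 0).left_unit, (pair 0).right_unit] at deriv_neg_one
    linarith
  · have deriv_zero := apply_top (pair j.succ).left_unit (pair j.succ).right_unit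
      ((pair j.succ).dotProduct_mulVec_eq.trans heq)
    have horth : u j.succ ⬝ᵥ u 0 = 0 := by
      rw [col_dotProduct_col hSVD.transpose_mul_left]
      simp
    rw [horth, zero_mul] at deriv_zero
    linarith

end SingularValues

section Perturbation

theorem hasFDerivAt_of_mul_eq_apply_sub {E Θ : Type*} [NormedAddCommGroup E] [NormedSpace ℝ E]
    [FiniteDimensional ℝ E] [TopologicalSpace Θ] {f : E → ℝ} {f' : E →L[ℝ] ℝ} {Y : E}
    {θ : E → Θ} {θ₀ : Θ} {δ : Θ → ℝ} {g : Θ → E → ℝ}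
    (hθ : Filter.Tendsto θ (nhds Y) (nhds θ₀)) (hδ : ContinuousAt δ θ₀) (hδ₀ : δ θ₀ ≠ 0)
    (hg : ∀ H, ContinuousAt (fun t => g t H) θ₀) (hlin : ∀ t, IsLinearMap ℝ (g t))
    (hf : ∀ X, δ (θ X) * f X = g (θ X) (X - Y)) (hf' : ∀ H, δ θ₀ * f' H = g θ₀ H) :
    HasFDerivAt f f' Y := by
  let L (t : Θ) : E →L[ℝ] ℝ := (δ t)⁻¹ • ((hlin t).mk' (g t)).toContinuousLinearMap
  have hL : L θ₀ = f' := ContinuousLinearMap.ext fun H => by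
    change (δ θ₀)⁻¹ * g θ₀ H = f' H
    rw [← hf', inv_mul_cancel_left₀ hδ₀]
  have hδθ : Filter.Tendsto (fun X => δ (θ X)) (nhds Y) (nhds (δ θ₀)) := hδ.tendsto.comp hθ
  have hf_eq (X) (hX : δ (θ X) ≠ 0) : f X = L (θ X) (X - Y) := by
    change f X = (δ (θ X))⁻¹ * g (θ X) (X - Y)
    rw [← hf, inv_mul_cancel_left₀ hX]
  have hfY : f Y = 0 := by
    rw [hf_eq Y (hδθ.eventually_ne hδ₀).self_of_nhds, sub_self, map_zero]
  have hLf' : Filter.Tendsto (fun X => L (θ X) - f') (nhds Y) (nhds 0) := by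
    have hLcont : ContinuousAt L θ₀ :=
      continuousAt_clm_apply.mpr fun H => (hδ.inv₀ hδ₀).mul (hg H)
    simpa [hL] using (hLcont.tendsto.comp hθ).sub_const f'
  rw [hasFDerivAt_iff_isLittleO]
  refine Asymptotics.IsLittleO.congr' (f₁ := fun X => (L (θ X) - f') (X - Y)) ?_
    ((hδθ.eventually_ne hδ₀).mono fun X hX => ?_) Filter.EventuallyEq.rfl
  · refine Asymptotics.IsLittleO.of_bound fun ε hε => ?_
    filter_upwards [hLf'.norm.eventually_le_const (by simpa using hε)] with X hX
    exact (L (θ X) - f').le_of_opNorm_le hX _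
  · change L (θ X) (X - Y) - f' (X - Y) = f X - f Y - f' (X - Y)
    rw [hf_eq X hX, hfY, sub_zero]

theorem tendsto_mulVec_zero {α m κ : Type*} [Fintype κ] {l : Filter α} {M : α → Matrix m κ ℝ}
    {w : α → κ → ℝ} (hM : ∀ i j, Filter.Tendsto (fun x => M x i j) l (nhds 0))
    (hw : ∀ x j, |w x j| ≤ 1) (i : m) :
    Filter.Tendsto (fun x => (M x *ᵥ w x) i) l (nhds 0) := by
  have hsum : Filter.Tendsto (fun x => ∑ j, |M x i j|) l (nhds 0) := by
    simpa using tendsto_finsetSum Finset.univ fun j _ => (hM i j).abs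
  refine squeeze_zero_norm (fun x => ?_) hsum
  refine (Finset.abs_sum_le_sum_abs _ _).trans (Finset.sum_le_sum fun j _ => ?_)
  rw [abs_mul]
  exact mul_le_of_le_one_right (abs_nonneg _) (hw x j)

theorem tendsto_zero_of_mul_eq {α : Type*} {l : Filter α} {δ x y : α → ℝ} {δ₀ : ℝ}
    (hδ : Filter.Tendsto δ l (nhds δ₀)) (hδ₀ : δ₀ ≠ 0) (hy : Filter.Tendsto y l (nhds 0))
    (h : ∀ a, δ a * x a = y a) : Filter.Tendsto x l (nhds 0) := by
  have hquot : Filter.Tendsto (fun a => (δ a)⁻¹ * y a) l (nhds 0) := by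
    simpa using (hδ.inv₀ hδ₀).mul hy
  refine hquot.congr' ((hδ.eventually_ne hδ₀).mono fun a ha => ?_)
  rw [← h, inv_mul_cancel_left₀ ha]

/-- `K Y` is a rank-one summand `u vᵀ` of `Y`, where `(u, v)` is a pair of unit singular vectors
for the singular value `τ Y`; the pair itself, in particular its sign, is not chosen. -/
def IsRankOnePart {m κ : Type*} [Fintype m] [Fintype κ] (τ : (m → κ → ℝ) → ℝ)
    (K : (m → κ → ℝ) → m → κ → ℝ) : Prop :=
  ∀ Y, ∃ u v, IsSingularPair (of Y) (τ Y) u v ∧ of (K Y) = vecMulVec u v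

theorem IsRankOnePart.sum_sq {m κ : Type*} [Fintype m] [Fintype κ] {τ : (m → κ → ℝ) → ℝ}
    {K : (m → κ → ℝ) → m → κ → ℝ} (hK : IsRankOnePart τ K) (X : m → κ → ℝ) :
    ∑ i, ∑ j, K X i j ^ 2 = 1 := by
  obtain ⟨u, v, h, huv⟩ := hK X
  calc ∑ i, ∑ j, K X i j ^ 2 = ∑ i, ∑ j, (u i * u i) * (v j * v j) := by
        refine Finset.sum_congr rfl fun i _ => Finset.sum_congr rfl fun j _ => ?_
        rw [← of_apply (K X), huv, vecMulVec_apply]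
        ring
    _ = (u ⬝ᵥ u) * (v ⬝ᵥ v) := (Fintype.sum_mul_sum _ _).symm
    _ = 1 := by rw [h.left_unit, h.right_unit, one_mul]

variable {κ ρ : Type*} [DecidableEq κ]

theorem tendsto_sub_rectDiagonal_apply (s : κ → ℝ) (i : κ ⊕ ρ) (j : κ) :
    Filter.Tendsto (fun X : κ ⊕ ρ → κ → ℝ => X i j - rectDiagonal s i j) (nhds (rectDiagonal s))
      (nhds 0) := by
  have hcont : Continuous fun X : κ ⊕ ρ → κ → ℝ => X i j - rectDiagonal s i j :=
    (continuous_apply_apply i j).sub continuous_const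
  simpa using hcont.tendsto (rectDiagonal s)

variable [Fintype κ]

theorem rectDiagonal_mulVec (s v : κ → ℝ) :
    of (rectDiagonal s : κ ⊕ ρ → κ → ℝ) *ᵥ v = Sum.elim (s * v) 0 := by
  ext (j | _)
  · exact single_dotProduct v (s j) j
  · exact zero_dotProduct v

variable [Fintype ρ]

theorem rectDiagonal_transpose_mulVec (s : κ → ℝ) (u : κ ⊕ ρ → ℝ) (j : κ) :
    ((of (rectDiagonal s : κ ⊕ ρ → κ → ℝ))ᵀ *ᵥ u) j = s j * u (Sum.inl j) := by
  simp [mulVec, dotProduct, rectDiagonal, Pi.single_apply, Fintype.sum_sum_type]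

section SingularPair

variable {X : κ ⊕ ρ → κ → ℝ} {τ : ℝ} {u : κ ⊕ ρ → ℝ} {v : κ → ℝ}

theorem IsSingularPair.mulVec_sub_rectDiagonal (h : IsSingularPair (of X) τ u v) (s : κ → ℝ) :
    of (X - rectDiagonal s) *ᵥ v = τ • u - Sum.elim (s * v) 0 := by
  rw [← rectDiagonal_mulVec, ← h.mulVec_eq, ← sub_mulVec]
  rfl

theorem IsSingularPair.transpose_mulVec_sub_rectDiagonal (h : IsSingularPair (of X) τ u v)
    (s : κ → ℝ) (j : κ) :
    ((of (X - rectDiagonal s))ᵀ *ᵥ u) j = τ * v j - s j * u (Sum.inl j) := by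
  rw [← rectDiagonal_transpose_mulVec, ← smul_eq_mul, ← Pi.smul_apply, ← h.transpose_mulVec_eq,
    ← Pi.sub_apply, ← sub_mulVec]
  rfl

theorem IsSingularPair.left_inl (h : IsSingularPair (of X) τ u v) (s : κ → ℝ) (j : κ) :
    (τ ^ 2 - s j ^ 2) * u (Sum.inl j) = s j * ((of (X - rectDiagonal s))ᵀ *ᵥ u) j +
      τ * (of (X - rectDiagonal s) *ᵥ v) (Sum.inl j) := by
  rw [h.mulVec_sub_rectDiagonal, h.transpose_mulVec_sub_rectDiagonal]
  simp only [Pi.sub_apply, Pi.smul_apply, Sum.elim_inl, Pi.mul_apply, smul_eq_mul]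
  ring

theorem IsSingularPair.right (h : IsSingularPair (of X) τ u v) (s : κ → ℝ) (j : κ) :
    (τ ^ 2 - s j ^ 2) * v j = s j * (of (X - rectDiagonal s) *ᵥ v) (Sum.inl j) +
      τ * ((of (X - rectDiagonal s))ᵀ *ᵥ u) j := by
  rw [h.mulVec_sub_rectDiagonal, h.transpose_mulVec_sub_rectDiagonal]
  simp only [Pi.sub_apply, Pi.smul_apply, Sum.elim_inl, Pi.mul_apply, smul_eq_mul]
  ring

theorem IsSingularPair.left_inr (h : IsSingularPair (of X) τ u v) (s : κ → ℝ) (r : ρ) :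
    τ * u (Sum.inr r) = (of (X - rectDiagonal s) *ᵥ v) (Sum.inr r) := by
  rw [h.mulVec_sub_rectDiagonal]
  simp

end SingularPair

section TendstoSingularPair

variable {τ : (κ ⊕ ρ → κ → ℝ) → ℝ} {u : (κ ⊕ ρ → κ → ℝ) → κ ⊕ ρ → ℝ}
  {v : (κ ⊕ ρ → κ → ℝ) → κ → ℝ} {s : κ → ℝ} {k : κ}

theorem tendsto_sub_rectDiagonal_mulVec (h : ∀ X, IsSingularPair (of X) (τ X) (u X) (v X))
    (s : κ → ℝ) (i : κ ⊕ ρ) :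
    Filter.Tendsto (fun X => (of (X - rectDiagonal s) *ᵥ v X) i) (nhds (rectDiagonal s))
      (nhds 0) :=
  tendsto_mulVec_zero (tendsto_sub_rectDiagonal_apply s)
    (fun X => abs_le_one_of_dotProduct_self_eq_one (h X).right_unit) i

theorem tendsto_sub_rectDiagonal_transpose_mulVec
    (h : ∀ X, IsSingularPair (of X) (τ X) (u X) (v X)) (s : κ → ℝ) (j : κ) :
    Filter.Tendsto (fun X => ((of (X - rectDiagonal s))ᵀ *ᵥ u X) j) (nhds (rectDiagonal s))
      (nhds 0) :=
  tendsto_mulVec_zero (M := fun X => (of (X - rectDiagonal s : κ ⊕ ρ → κ → ℝ))ᵀ)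
    (fun j i => tendsto_sub_rectDiagonal_apply s i j)
    (fun X => abs_le_one_of_dotProduct_self_eq_one (h X).left_unit) j

theorem tendsto_singularPair_right (h : ∀ X, IsSingularPair (of X) (τ X) (u X) (v X))
    (hτ : Filter.Tendsto τ (nhds (rectDiagonal s)) (nhds (s k)))
    {j : κ} (hj : s j ^ 2 ≠ s k ^ 2) :
    Filter.Tendsto (fun X => v X j) (nhds (rectDiagonal s)) (nhds 0) := by
  refine tendsto_zero_of_mul_eq ((hτ.pow 2).sub_const _) (sub_ne_zero.mpr hj.symm) ?_
    fun X => (h X).right s j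
  simpa using ((tendsto_sub_rectDiagonal_mulVec h s (Sum.inl j)).const_mul (s j)).add
    (hτ.mul (tendsto_sub_rectDiagonal_transpose_mulVec h s j))

theorem tendsto_singularPair_left (h : ∀ X, IsSingularPair (of X) (τ X) (u X) (v X))
    (hτ : Filter.Tendsto τ (nhds (rectDiagonal s)) (nhds (s k))) (hk : s k ≠ 0)
    (hs : ∀ j ≠ k, s j ^ 2 ≠ s k ^ 2) {i : κ ⊕ ρ} (hi : i ≠ Sum.inl k) :
    Filter.Tendsto (fun X => u X i) (nhds (rectDiagonal s)) (nhds 0) := by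
  rcases i with j | r
  · refine tendsto_zero_of_mul_eq ((hτ.pow 2).sub_const _)
      (sub_ne_zero.mpr (hs j fun hj => hi (congrArg _ hj)).symm) ?_ fun X => (h X).left_inl s j
    simpa using ((tendsto_sub_rectDiagonal_transpose_mulVec h s j).const_mul (s j)).add
      (hτ.mul (tendsto_sub_rectDiagonal_mulVec h s (Sum.inl j)))
  · exact tendsto_zero_of_mul_eq hτ hk (tendsto_sub_rectDiagonal_mulVec h s (Sum.inr r))
      fun X => (h X).left_inr s r

theorem tendsto_singularPair_left_sq (h : ∀ X, IsSingularPair (of X) (τ X) (u X) (v X))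
    (hτ : Filter.Tendsto τ (nhds (rectDiagonal s)) (nhds (s k))) (hk : s k ≠ 0)
    (hs : ∀ j ≠ k, s j ^ 2 ≠ s k ^ 2) :
    Filter.Tendsto (fun X => u X (Sum.inl k) ^ 2) (nhds (rectDiagonal s)) (nhds 1) := by
  classical
  have hrest : Filter.Tendsto (fun X => ∑ i ∈ Finset.univ.erase (Sum.inl k), u X i ^ 2)
      (nhds (rectDiagonal s)) (nhds (∑ i ∈ Finset.univ.erase (Sum.inl k : κ ⊕ ρ), 0 ^ 2)) :=
    tendsto_finsetSum _ fun i hi =>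
      (tendsto_singularPair_left h hτ hk hs (Finset.ne_of_mem_erase hi)).pow 2
  have hsub := hrest.const_sub 1
  rw [zero_pow two_ne_zero, Finset.sum_const_zero, sub_zero] at hsub
  refine hsub.congr fun X => ?_
  rw [← (h X).left_unit, dotProduct, ← Finset.add_sum_erase _ _ (Finset.mem_univ (Sum.inl k))]
  simp only [pow_two, add_sub_cancel_right]

theorem tendsto_singularPair_left_mul_right (h : ∀ X, IsSingularPair (of X) (τ X) (u X) (v X))
    (hτ : Filter.Tendsto τ (nhds (rectDiagonal s)) (nhds (s k))) (hk : s k ≠ 0)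
    (hs : ∀ j ≠ k, s j ^ 2 ≠ s k ^ 2) :
    Filter.Tendsto (fun X => u X (Sum.inl k) * v X k) (nhds (rectDiagonal s)) (nhds 1) := by
  have hu : Filter.Tendsto (fun X => (of (X - rectDiagonal s) *ᵥ v X) (Sum.inl k) *
      u X (Sum.inl k)) (nhds (rectDiagonal s)) (nhds 0) :=
    (tendsto_sub_rectDiagonal_mulVec h s (Sum.inl k)).zero_mul_isBoundedUnder_le
      (Filter.isBoundedUnder_of ⟨1, fun X =>
        abs_le_one_of_dotProduct_self_eq_one (h X).left_unit _⟩)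
  have hlim := ((hτ.mul (tendsto_singularPair_left_sq h hτ hk hs)).sub hu).const_mul (s k)⁻¹
  rw [mul_one, sub_zero, inv_mul_cancel₀ hk] at hlim
  refine hlim.congr fun X => ?_
  rw [(h X).mulVec_sub_rectDiagonal]
  simp only [Pi.sub_apply, Pi.smul_apply, Sum.elim_inl, Pi.mul_apply, smul_eq_mul]
  field_simp
  ring

end TendstoSingularPair

section RankOnePart

variable {τ : (κ ⊕ ρ → κ → ℝ) → ℝ} {K : (κ ⊕ ρ → κ → ℝ) → κ ⊕ ρ → κ → ℝ}

theorem IsRankOnePart.apply_inl (hK : IsRankOnePart τ K) (s : κ → ℝ) (X : κ ⊕ ρ → κ → ℝ)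
    (j l : κ) : (τ X ^ 2 - s j ^ 2) * K X (Sum.inl j) l =
      s j * ((of (X - rectDiagonal s))ᵀ * of (K X) : Matrix κ κ ℝ) j l +
        τ X * (of (X - rectDiagonal s) * ((of (K X))ᵀ * of (K X)) : Matrix (κ ⊕ ρ) κ ℝ)
          (Sum.inl j) l := by
  obtain ⟨u, v, h, huv⟩ := hK X
  rw [← of_apply (K X), huv, transpose_vecMulVec, vecMulVec_mul_vecMulVec, h.left_unit, one_smul,
    mul_vecMulVec, mul_vecMulVec]
  simp only [vecMulVec_apply]
  linear_combination v l * h.left_inl s j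

theorem IsRankOnePart.apply_right (hK : IsRankOnePart τ K) (s : κ → ℝ) (X : κ ⊕ ρ → κ → ℝ)
    (i : κ ⊕ ρ) (j : κ) : (τ X ^ 2 - s j ^ 2) * K X i j =
      s j * (of (K X) * (of (X - rectDiagonal s))ᵀ : Matrix (κ ⊕ ρ) (κ ⊕ ρ) ℝ) i (Sum.inl j) +
        τ X * (of (K X) * (of (K X))ᵀ * of (X - rectDiagonal s) : Matrix (κ ⊕ ρ) κ ℝ) i j := by
  obtain ⟨u, v, h, huv⟩ := hK X
  rw [← of_apply (K X), huv, transpose_vecMulVec, vecMulVec_mul_vecMulVec, h.right_unit, one_smul,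
    vecMulVec_mul, vecMulVec_mul, vecMul_transpose, ← mulVec_transpose]
  simp only [vecMulVec_apply]
  linear_combination u i * h.right s j

theorem IsRankOnePart.apply_inr (hK : IsRankOnePart τ K) (s : κ → ℝ) (X : κ ⊕ ρ → κ → ℝ)
    (r : ρ) (l : κ) : τ X * K X (Sum.inr r) l =
      (of (X - rectDiagonal s) * ((of (K X))ᵀ * of (K X)) : Matrix (κ ⊕ ρ) κ ℝ) (Sum.inr r) l := by
  obtain ⟨u, v, h, huv⟩ := hK X
  rw [← of_apply (K X), huv, transpose_vecMulVec, vecMulVec_mul_vecMulVec, h.left_unit, one_smul,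
    mul_vecMulVec]
  simp only [vecMulVec_apply]
  linear_combination v l * h.left_inr s r

variable {s : κ → ℝ} {k : κ}

theorem IsRankOnePart.tendsto_rectDiagonal [DecidableEq ρ] (hK : IsRankOnePart τ K)
    (hτ : Filter.Tendsto τ (nhds (rectDiagonal s)) (nhds (s k))) (hk : s k ≠ 0)
    (hs : ∀ j ≠ k, s j ^ 2 ≠ s k ^ 2) :
    Filter.Tendsto K (nhds (rectDiagonal s))
      (nhds (Pi.single (Sum.inl k) (Pi.single k 1))) := by
  choose u v h huv using hK
  have hKuv (X) (i) (j) : K X i j = u X i * v X j := congrFun₂ (huv X) i j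
  refine tendsto_pi_nhds.mpr fun i => tendsto_pi_nhds.mpr fun j => ?_
  simp only [hKuv]
  by_cases hi : i = Sum.inl k
  · subst hi
    rw [Pi.single_eq_same]
    by_cases hj : j = k
    · subst hj
      rw [Pi.single_eq_same]
      exact tendsto_singularPair_left_mul_right h hτ hk hs
    · rw [Pi.single_eq_of_ne hj]
      exact Filter.isBoundedUnder_le_mul_tendsto_zero
        (Filter.isBoundedUnder_of ⟨1, fun X =>
          abs_le_one_of_dotProduct_self_eq_one (h X).left_unit _⟩)
        (tendsto_singularPair_right h hτ (hs j hj))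
  · rw [Pi.single_eq_of_ne hi]
    exact (tendsto_singularPair_left h hτ hk hs hi).zero_mul_isBoundedUnder_le
      (Filter.isBoundedUnder_of ⟨1, fun X =>
        abs_le_one_of_dotProduct_self_eq_one (h X).right_unit _⟩)

end RankOnePart

end Perturbation

section PerturbationDerivative

variable {κ ρ : Type*} [DecidableEq κ]

/-- The derivative at `rectDiagonal s` of the rank-one part of singular value `s k`; by `0⁻¹ = 0`
its entry at `(inl k, k)` vanishes, as it should. -/
noncomputable def rankOnePartDeriv (s : κ → ℝ) (k : κ) :
    (κ ⊕ ρ → κ → ℝ) →ₗ[ℝ] (κ ⊕ ρ → κ → ℝ) where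
  toFun H := Sum.elim
    (fun j l => if l = k then
        (s k ^ 2 - s j ^ 2)⁻¹ * (s k * H (Sum.inl j) k + s j * H (Sum.inl k) j)
      else if j = k then
        (s k ^ 2 - s l ^ 2)⁻¹ * (s k * H (Sum.inl k) l + s l * H (Sum.inl l) k)
      else 0)
    (fun r l => if l = k then (s k)⁻¹ * H (Sum.inr r) k else 0)
  map_add' H H' := by
    ext (j | r) l <;> simp only [Sum.elim_inl, Sum.elim_inr, Pi.add_apply] <;> split_ifs <;> ring
  map_smul' c H := by
    ext (j | r) l <;>
      simp only [Sum.elim_inl, Sum.elim_inr, Pi.smul_apply, smul_eq_mul, RingHom.id_apply] <;>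
      split_ifs <;> ring

variable [Fintype κ] [Fintype ρ] {τ : (κ ⊕ ρ → κ → ℝ) → ℝ}
  {K : (κ ⊕ ρ → κ → ℝ) → κ ⊕ ρ → κ → ℝ} {s : κ → ℝ} {k : κ}

theorem IsRankOnePart.hasFDerivAt_apply_inl (hK : IsRankOnePart τ K)
    (hτ : Filter.Tendsto τ (nhds (rectDiagonal s)) (nhds (s k))) (hk : s k ≠ 0)
    (hs : ∀ j ≠ k, s j ^ 2 ≠ s k ^ 2) {j : κ} (hj : j ≠ k) (l : κ) :
    HasFDerivAt (fun X => K X (Sum.inl j) l)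
      (ContinuousLinearMap.proj l ∘L ContinuousLinearMap.proj (Sum.inl j) ∘L
        (rankOnePartDeriv s k).toContinuousLinearMap) (rectDiagonal s) := by
  classical
  have hgap : s k ^ 2 - s j ^ 2 ≠ 0 := sub_ne_zero.mpr (hs j hj).symm
  refine hasFDerivAt_of_mul_eq_apply_sub (θ := fun X => (τ X, K X))
    (δ := fun q => q.1 ^ 2 - s j ^ 2)
    (g := fun q H => s j * ((of H)ᵀ * of q.2 : Matrix κ κ ℝ) j l +
      q.1 * (of H * ((of q.2)ᵀ * of q.2) : Matrix (κ ⊕ ρ) κ ℝ) (Sum.inl j) l)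
    (hτ.prodMk_nhds (hK.tendsto_rectDiagonal hτ hk hs)) (by fun_prop) hgap (fun H => ?_)
    (fun q => ⟨fun H H' => ?_, fun c H => ?_⟩) (fun X => hK.apply_inl s X j l) fun H => ?_
  · simp only [Matrix.mul_apply, of_apply, transpose_apply]
    fun_prop
  · simp only [← of_add_of, transpose_add, Matrix.add_mul, Matrix.add_apply]
    ring
  · simp only [← smul_of, transpose_smul, Matrix.smul_mul, Matrix.smul_apply, smul_eq_mul]
    ring
  · by_cases hl : l = k <;>
      simp [rankOnePartDeriv, Matrix.mul_apply, Pi.single_apply, ite_apply, hgap, hl, hj, add_comm]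

theorem IsRankOnePart.hasFDerivAt_apply_inr (hK : IsRankOnePart τ K)
    (hτ : Filter.Tendsto τ (nhds (rectDiagonal s)) (nhds (s k))) (hk : s k ≠ 0)
    (hs : ∀ j ≠ k, s j ^ 2 ≠ s k ^ 2) (r : ρ) (l : κ) :
    HasFDerivAt (fun X => K X (Sum.inr r) l)
      (ContinuousLinearMap.proj l ∘L ContinuousLinearMap.proj (Sum.inr r) ∘L
        (rankOnePartDeriv s k).toContinuousLinearMap) (rectDiagonal s) := by
  classical
  refine hasFDerivAt_of_mul_eq_apply_sub (θ := fun X => (τ X, K X)) (δ := fun q => q.1)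
    (g := fun q H => (of H * ((of q.2)ᵀ * of q.2) : Matrix (κ ⊕ ρ) κ ℝ) (Sum.inr r) l)
    (hτ.prodMk_nhds (hK.tendsto_rectDiagonal hτ hk hs)) (by fun_prop) hk (fun H => ?_)
    (fun q => ⟨fun H H' => ?_, fun c H => ?_⟩) (fun X => hK.apply_inr s X r l) fun H => ?_
  · simp only [Matrix.mul_apply, of_apply, transpose_apply]
    fun_prop
  · simp only [← of_add_of, Matrix.add_mul, Matrix.add_apply]
  · simp only [← smul_of, Matrix.smul_mul, Matrix.smul_apply]
  · by_cases hl : l = k <;>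
      simp [rankOnePartDeriv, Matrix.mul_apply, Pi.single_apply, ite_apply, hk, hl]

theorem IsRankOnePart.hasFDerivAt_apply_right (hK : IsRankOnePart τ K)
    (hτ : Filter.Tendsto τ (nhds (rectDiagonal s)) (nhds (s k))) (hk : s k ≠ 0)
    (hs : ∀ j ≠ k, s j ^ 2 ≠ s k ^ 2) {l : κ} (hl : l ≠ k) :
    HasFDerivAt (fun X => K X (Sum.inl k) l)
      (ContinuousLinearMap.proj l ∘L ContinuousLinearMap.proj (Sum.inl k) ∘L
        (rankOnePartDeriv s k).toContinuousLinearMap) (rectDiagonal s) := by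
  classical
  have hgap : s k ^ 2 - s l ^ 2 ≠ 0 := sub_ne_zero.mpr (hs l hl).symm
  refine hasFDerivAt_of_mul_eq_apply_sub (θ := fun X => (τ X, K X))
    (δ := fun q => q.1 ^ 2 - s l ^ 2)
    (g := fun q H =>
      s l * (of q.2 * (of H)ᵀ : Matrix (κ ⊕ ρ) (κ ⊕ ρ) ℝ) (Sum.inl k) (Sum.inl l) +
        q.1 * (of q.2 * (of q.2)ᵀ * of H : Matrix (κ ⊕ ρ) κ ℝ) (Sum.inl k) l)
    (hτ.prodMk_nhds (hK.tendsto_rectDiagonal hτ hk hs)) (by fun_prop) hgap (fun H => ?_)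
    (fun q => ⟨fun H H' => ?_, fun c H => ?_⟩) (fun X => hK.apply_right s X _ l) fun H => ?_
  · simp only [Matrix.mul_apply, of_apply, transpose_apply]
    fun_prop
  · simp only [← of_add_of, transpose_add, Matrix.mul_add, Matrix.add_apply]
    ring
  · simp only [← smul_of, transpose_smul, Matrix.mul_smul, Matrix.smul_apply, smul_eq_mul]
    ring
  · simp [rankOnePartDeriv, Matrix.mul_apply, Pi.single_apply, ite_apply, hgap, hl, add_comm]

theorem IsRankOnePart.hasFDerivAt_apply_of_ne (hK : IsRankOnePart τ K)
    (hτ : Filter.Tendsto τ (nhds (rectDiagonal s)) (nhds (s k))) (hk : s k ≠ 0)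
    (hs : ∀ j ≠ k, s j ^ 2 ≠ s k ^ 2) {i : κ ⊕ ρ} {l : κ} (hil : (i, l) ≠ (Sum.inl k, k)) :
    HasFDerivAt (fun X => K X i l)
      (ContinuousLinearMap.proj l ∘L ContinuousLinearMap.proj i ∘L
        (rankOnePartDeriv s k).toContinuousLinearMap) (rectDiagonal s) := by
  rcases i with j | r
  · by_cases hj : j = k
    · subst hj
      exact hK.hasFDerivAt_apply_right hτ hk hs fun hl => hil (Prod.ext rfl hl)
    · exact hK.hasFDerivAt_apply_inl hτ hk hs hj l
  · exact hK.hasFDerivAt_apply_inr hτ hk hs r l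

/-- The remaining entry is determined by the others, as the entries of `K X` have square sum `1`. -/
theorem IsRankOnePart.hasFDerivAt_apply_self (hK : IsRankOnePart τ K)
    (hτ : Filter.Tendsto τ (nhds (rectDiagonal s)) (nhds (s k))) (hk : s k ≠ 0)
    (hs : ∀ j ≠ k, s j ^ 2 ≠ s k ^ 2) :
    HasFDerivAt (fun X => K X (Sum.inl k) k) (0 : (κ ⊕ ρ → κ → ℝ) →L[ℝ] ℝ) (rectDiagonal s) := by
  classical
  have hK_lim := hK.tendsto_rectDiagonal hτ hk hs
  have hK_eq := eq_of_tendsto_nhds hK_lim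
  let q (X : κ ⊕ ρ → κ → ℝ) : ℝ :=
    ∑ x ∈ Finset.univ.erase ((Sum.inl k : κ ⊕ ρ), k), K X x.1 x.2 ^ 2
  have hK_zero {x : (κ ⊕ ρ) × κ} (hx : x ≠ (Sum.inl k, k)) : K (rectDiagonal s) x.1 x.2 = 0 := by
    rw [hK_eq, Pi.single_apply]
    split_ifs with hx₁
    · exact Pi.single_eq_of_ne (fun hx₂ => hx (Prod.ext hx₁ hx₂)) 1
    · rfl
  have hq_eq (X) : 1 - q X = K X (Sum.inl k) k ^ 2 := by
    rw [← hK.sum_sq X, ← Fintype.sum_prod_type', ← Finset.add_sum_erase _ _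
      (Finset.mem_univ ((Sum.inl k : κ ⊕ ρ), k)), add_sub_cancel_right]
  have hq_deriv : HasFDerivAt (fun X => 1 - q X) (0 : (κ ⊕ ρ → κ → ℝ) →L[ℝ] ℝ)
      (rectDiagonal s) := by
    have hsum := (HasFDerivAt.fun_sum fun x (hx : x ∈ Finset.univ.erase (Sum.inl k, k)) =>
      (hK.hasFDerivAt_apply_of_ne hτ hk hs (Finset.ne_of_mem_erase hx)).pow 2).const_sub 1
    refine hsum.congr_fderiv ?_
    rw [Finset.sum_eq_zero, neg_zero]
    intro x hx
    rw [hK_zero (Finset.ne_of_mem_erase hx)]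
    simp
  have hsqrt := hq_deriv.sqrt (by simp [hq_eq, hK_eq])
  rw [smul_zero] at hsqrt
  have hpos : ∀ᶠ X in nhds (rectDiagonal s), 0 < K X (Sum.inl k) k :=
    (tendsto_pi_nhds.mp (tendsto_pi_nhds.mp hK_lim (Sum.inl k)) k).eventually_const_lt (by simp)
  refine hsqrt.congr_of_eventuallyEq (hpos.mono fun X hX => ?_)
  change _ = √(1 - q X)
  rw [hq_eq, Real.sqrt_sq hX.le]

theorem IsRankOnePart.hasFDerivAt_rectDiagonal (hK : IsRankOnePart τ K)
    (hτ : Filter.Tendsto τ (nhds (rectDiagonal s)) (nhds (s k))) (hk : s k ≠ 0)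
    (hs : ∀ j ≠ k, s j ^ 2 ≠ s k ^ 2) :
    HasFDerivAt K (rankOnePartDeriv s k).toContinuousLinearMap (rectDiagonal s) := by
  refine hasFDerivAt_pi'.mpr fun i => hasFDerivAt_pi'.mpr fun l => ?_
  by_cases hil : (i, l) = (Sum.inl k, k)
  · obtain ⟨rfl, rfl⟩ := Prod.mk.inj hil
    refine (hK.hasFDerivAt_apply_self hτ hk hs).congr_fderiv (ContinuousLinearMap.ext fun H => ?_)
    simp [rankOnePartDeriv]
  · exact hK.hasFDerivAt_apply_of_ne hτ hk hs hil

end PerturbationDerivative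

section PerturbationDeterminant

theorem det_eq_of_comp_eq_comp {E : Type*} [AddCommGroup E] [Module ℝ E] [FiniteDimensional ℝ E]
    {f g Q : E →ₗ[ℝ] E} (hQ : Function.Injective Q) (h : f ∘ₗ Q = Q ∘ₗ g) :
    LinearMap.det f = LinearMap.det g := by
  rw [← LinearMap.det_conj g (LinearEquiv.ofInjectiveEndo Q hQ)]
  congr 1
  rw [← LinearMap.comp_assoc, LinearEquiv.eq_comp_toLinearMap_symm]
  exact h

theorem det_mulLeft_pi_pi {ι κ : Type*} [Fintype ι] [Fintype κ] (c : ι → κ → ℝ) :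
    LinearMap.det (LinearMap.mulLeft ℝ c) = ∏ i, ∏ j, c i j := by
  have hpi : LinearMap.mulLeft ℝ c = LinearMap.pi fun i =>
      (LinearMap.pi fun j => (c i j • LinearMap.id : ℝ →ₗ[ℝ] ℝ) ∘ₗ LinearMap.proj j) ∘ₗ
        LinearMap.proj i := rfl
  simp only [hpi, LinearMap.det_pi, LinearMap.det_smul, LinearMap.det_id, Module.finrank_self,
    pow_one, mul_one]

variable {κ ρ : Type*} [DecidableEq κ]

/-- Replaces the entries `a = H (inl j) k` and `b = H (inl k) j` by `a + b` and `a - b`, which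
diagonalizes `rankOnePartDeriv s k`. -/
def crossSumDiff (k : κ) : (κ ⊕ ρ → κ → ℝ) →ₗ[ℝ] (κ ⊕ ρ → κ → ℝ) where
  toFun H := Sum.elim
    (fun j l => if l = k then H (Sum.inl j) k + H (Sum.inl k) j
      else if j = k then H (Sum.inl l) k - H (Sum.inl k) l else H (Sum.inl j) l)
    (fun r => H (Sum.inr r))
  map_add' H H' := by
    ext (j | r) l <;> simp only [Sum.elim_inl, Sum.elim_inr, Pi.add_apply]
    split_ifs <;> ring
  map_smul' c H := by
    ext (j | r) l <;>
      simp only [Sum.elim_inl, Sum.elim_inr, Pi.smul_apply, smul_eq_mul, RingHom.id_apply]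
    split_ifs <;> ring

theorem crossSumDiff_injective (k : κ) :
    Function.Injective (crossSumDiff k : (κ ⊕ ρ → κ → ℝ) →ₗ[ℝ] (κ ⊕ ρ → κ → ℝ)) := by
  refine (injective_iff_map_eq_zero _).mpr fun H hH => ?_
  have hinl (j l : κ) := congrFun₂ hH (Sum.inl j) l
  have hinr (r : ρ) (l : κ) := congrFun₂ hH (Sum.inr r) l
  simp only [crossSumDiff, LinearMap.coe_mk, AddHom.coe_mk, Sum.elim_inl, Sum.elim_inr,
    Pi.zero_apply] at hinl hinr
  ext (j | r) l
  · change H (Sum.inl j) l = 0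
    grind
  · exact hinr r l

/-- The eigenvalues of `rankOnePartDeriv s k`; by `0⁻¹ = 0` the one at `(inl k, k)` is `0`. -/
noncomputable def rankOnePartEigenvalue (s : κ → ℝ) (k : κ) : κ ⊕ ρ → κ → ℝ :=
  Sum.elim
    (fun j l => if l = k then (s k - s j)⁻¹ else if j = k then (s k + s l)⁻¹ else 0)
    (fun _ l => if l = k then (s k)⁻¹ else 0)

variable {s : κ → ℝ} {k : κ}

theorem rankOnePartDeriv_comp_crossSumDiff (hs : ∀ j ≠ k, s j ^ 2 ≠ s k ^ 2) :
    (rankOnePartDeriv s k : (κ ⊕ ρ → κ → ℝ) →ₗ[ℝ] _) ∘ₗ crossSumDiff k =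
      crossSumDiff k ∘ₗ LinearMap.mulLeft ℝ (rankOnePartEigenvalue s k) := by
  have hsub {j} (hj : j ≠ k) : s k - s j ≠ 0 := fun h => hs j hj (by rw [sub_eq_zero.mp h])
  have hadd {j} (hj : j ≠ k) : s k + s j ≠ 0 := fun h =>
    hs j hj (by rw [eq_neg_of_add_eq_zero_left h, neg_sq])
  refine LinearMap.ext fun H => funext₂ fun i l => ?_
  simp only [LinearMap.comp_apply, rankOnePartDeriv, crossSumDiff, rankOnePartEigenvalue,
    LinearMap.coe_mk, AddHom.coe_mk, LinearMap.mulLeft_apply, Pi.mul_apply]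
  rcases i with j | r
  · by_cases hj : j = k <;> by_cases hl : l = k
    · subst hj hl
      simp
    · simp only [Sum.elim_inl, hj, hl, if_true, if_false, sq_sub_sq]
      field_simp [hsub hl, hadd hl]
      ring
    · simp only [Sum.elim_inl, hj, hl, if_true, if_false, sq_sub_sq]
      field_simp [hsub hj, hadd hj]
      ring
    · simp [hj, hl]
  · by_cases hl : l = k <;> simp [hl]

theorem prod_one_add_mul_rankOnePartEigenvalue [Fintype κ] [Fintype ρ] (s : κ → ℝ) (k : κ)
    (t : ℝ) : ∏ i : κ ⊕ ρ, ∏ l, (1 + t * rankOnePartEigenvalue s k i l) =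
      (1 + t * (s k)⁻¹) ^ Fintype.card ρ *
        ∏ j ∈ Finset.univ.erase k, (1 + t * (s k - s j)⁻¹) * (1 + t * (s k + s j)⁻¹) := by
  have hinl {j} (hj : j ≠ k) :
      ∏ l, (1 + t * rankOnePartEigenvalue (ρ := ρ) s k (Sum.inl j) l) = 1 + t * (s k - s j)⁻¹ := by
    rw [Finset.prod_eq_single k (fun l _ hl => by simp [rankOnePartEigenvalue, hl, hj]) (by simp)]
    simp [rankOnePartEigenvalue]
  have hinl_self : ∏ l, (1 + t * rankOnePartEigenvalue (ρ := ρ) s k (Sum.inl k) l) =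
      ∏ l ∈ Finset.univ.erase k, (1 + t * (s k + s l)⁻¹) := by
    have hself : 1 + t * rankOnePartEigenvalue (ρ := ρ) s k (Sum.inl k) k = 1 := by
      simp [rankOnePartEigenvalue]
    rw [← Finset.mul_prod_erase _ _ (Finset.mem_univ k), hself, one_mul]
    refine Finset.prod_congr rfl fun l hl => ?_
    simp [rankOnePartEigenvalue, Finset.ne_of_mem_erase hl]
  have hinr (r : ρ) :
      ∏ l, (1 + t * rankOnePartEigenvalue (ρ := ρ) s k (Sum.inr r) l) = 1 + t * (s k)⁻¹ := by
    rw [Finset.prod_eq_single k (fun l _ hl => by simp [rankOnePartEigenvalue, hl]) (by simp)]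
    simp [rankOnePartEigenvalue]
  rw [Fintype.prod_sum_type, ← Finset.mul_prod_erase _ _ (Finset.mem_univ k), hinl_self,
    Finset.prod_congr rfl fun j hj => hinl (Finset.ne_of_mem_erase hj),
    Finset.prod_congr rfl fun r _ => hinr r, Finset.prod_const, Finset.card_univ,
    Finset.prod_mul_distrib]
  ring

theorem det_id_add_smul_rankOnePartDeriv [Fintype κ] [Fintype ρ] (hk : s k ≠ 0)
    (hs : ∀ j ≠ k, s j ^ 2 ≠ s k ^ 2) (t : ℝ) :
    LinearMap.det (LinearMap.id + t • (rankOnePartDeriv s k : (κ ⊕ ρ → κ → ℝ) →ₗ[ℝ] _)) *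
        (s k ^ Fintype.card ρ * ∏ j ∈ Finset.univ.erase k, (s k ^ 2 - s j ^ 2)) =
      (s k + t) ^ Fintype.card ρ * ∏ j ∈ Finset.univ.erase k, ((s k + t) ^ 2 - s j ^ 2) := by
  have hcomp : (LinearMap.id + t • (rankOnePartDeriv s k : (κ ⊕ ρ → κ → ℝ) →ₗ[ℝ] _)) ∘ₗ
      crossSumDiff k = crossSumDiff k ∘ₗ
        LinearMap.mulLeft ℝ (1 + t • rankOnePartEigenvalue s k) := by
    rw [LinearMap.add_comp, LinearMap.smul_comp, rankOnePartDeriv_comp_crossSumDiff hs]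
    ext1 H
    simp [add_mul]
  have hroot : (1 + t * (s k)⁻¹) * s k = s k + t := by field_simp
  have hpair {j} (hj : j ≠ k) : (1 + t * (s k - s j)⁻¹) * (1 + t * (s k + s j)⁻¹) *
      (s k ^ 2 - s j ^ 2) = (s k + t) ^ 2 - s j ^ 2 := by
    have hgap := sub_ne_zero.mpr (hs j hj).symm
    rw [sq_sub_sq, mul_ne_zero_iff] at hgap
    obtain ⟨hadd, hsub⟩ := hgap
    field_simp
    ring
  rw [det_eq_of_comp_eq_comp (crossSumDiff_injective k) hcomp, det_mulLeft_pi_pi]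
  simp only [Pi.add_apply, Pi.one_apply, Pi.smul_apply, smul_eq_mul,
    prod_one_add_mul_rankOnePartEigenvalue]
  rw [mul_mul_mul_comm, ← mul_pow, hroot, ← Finset.prod_mul_distrib,
    Finset.prod_congr rfl fun j hj => hpair (Finset.ne_of_mem_erase hj)]

end PerturbationDeterminant

section Rotation

variable {m κ ρ : Type*} [Fintype m] [Fintype κ] [Fintype ρ] [DecidableEq m] [DecidableEq κ]
  [DecidableEq ρ]

/-- The change of coordinates `H ↦ Uᵀ * H * V` in which a matrix with singular value decomposition
`U`, `V` is rectangular diagonal. -/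
def IsSVD.rotation {A : Matrix m κ ℝ} {s : κ → ℝ} {U : Matrix m (κ ⊕ ρ) ℝ} {V : Matrix κ κ ℝ}
    (h : IsSVD A s U V) : (m → κ → ℝ) ≃ₗ[ℝ] (κ ⊕ ρ → κ → ℝ) where
  toFun H := (Uᵀ * of H * V : Matrix (κ ⊕ ρ) κ ℝ)
  invFun H := (U * of H * Vᵀ : Matrix m κ ℝ)
  map_add' H H' := by
    rw [← of_add_of, Matrix.mul_add, Matrix.add_mul]
    rfl
  map_smul' c H := by
    rw [← smul_of, Matrix.mul_smul, Matrix.smul_mul]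
    rfl
  left_inv H := by
    change U * (Uᵀ * of H * V) * Vᵀ = of H
    rw [Matrix.mul_assoc, Matrix.mul_assoc, h.mul_transpose_right, Matrix.mul_one,
      ← Matrix.mul_assoc, h.mul_transpose_left, Matrix.one_mul]
  right_inv H := by
    change Uᵀ * (U * of H * Vᵀ) * V = of H
    rw [Matrix.mul_assoc, Matrix.mul_assoc, h.transpose_mul_right, Matrix.mul_one,
      ← Matrix.mul_assoc, h.transpose_mul_left, Matrix.one_mul]

variable {Y : m → κ → ℝ} {s : κ → ℝ} {U : Matrix m (κ ⊕ ρ) ℝ} {V : Matrix κ κ ℝ}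
  {τ : (m → κ → ℝ) → ℝ} {K : (m → κ → ℝ) → m → κ → ℝ} {k : κ}

theorem IsSVD.rotation_self (h : IsSVD (of Y) s U V) : h.rotation Y = rectDiagonal s :=
  h.rotate_eq

theorem IsSVD.rotation_symm_rectDiagonal (h : IsSVD (of Y) s U V) :
    h.rotation.symm (rectDiagonal s) = Y := by
  rw [← h.rotation_self, LinearEquiv.symm_apply_apply]

theorem IsSVD.tendsto_rotation_symm (h : IsSVD (of Y) s U V) :
    Filter.Tendsto h.rotation.symm (nhds (rectDiagonal s)) (nhds Y) := by
  have hcont := h.rotation.symm.toLinearMap.continuous_of_finiteDimensional.tendsto (rectDiagonal s)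
  rwa [LinearEquiv.coe_coe, h.rotation_symm_rectDiagonal] at hcont

theorem IsRankOnePart.rotate (hK : IsRankOnePart τ K) (h : IsSVD (of Y) s U V) :
    IsRankOnePart (fun X => τ (h.rotation.symm X))
      fun X => h.rotation (K (h.rotation.symm X)) := by
  intro X
  obtain ⟨u, v, huv, hKuv⟩ := hK (h.rotation.symm X)
  refine ⟨Uᵀ *ᵥ u, Vᵀ *ᵥ v, ?_, ?_⟩
  · have hrot := huv.rotate h.mul_transpose_left h.mul_transpose_right
    rwa [show Uᵀ * of (h.rotation.symm X) * V = of X from h.rotation.apply_symm_apply X] at hrot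
  · change Uᵀ * of (K (h.rotation.symm X)) * V = _
    rw [hKuv, mul_vecMulVec, vecMulVec_mul, ← mulVec_transpose]

theorem IsRankOnePart.apply_eq_vecMulVec (hK : IsRankOnePart τ K) (h : IsSVD (of Y) s U V)
    (hτ : Filter.Tendsto τ (nhds Y) (nhds (s k))) (hk : s k ≠ 0)
    (hs : ∀ j ≠ k, s j ^ 2 ≠ s k ^ 2) :
    of (K Y) = vecMulVec (U.col (Sum.inl k)) (V.col k) := by
  have hrot := eq_of_tendsto_nhds <|
    (hK.rotate h).tendsto_rectDiagonal (hτ.comp h.tendsto_rotation_symm) hk hs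
  rw [h.rotation_symm_rectDiagonal, ← LinearEquiv.eq_symm_apply] at hrot
  have hsingle : of (Pi.single (Sum.inl k) (Pi.single k 1) : κ ⊕ ρ → κ → ℝ) =
      vecMulVec (Pi.single (Sum.inl k) 1) (Pi.single k 1) := by
    rw [← single_eq_of_single_single, single_eq_single_vecMulVec_single]
  calc of (K Y) = U * of (Pi.single (Sum.inl k) (Pi.single k 1) : κ ⊕ ρ → κ → ℝ) * Vᵀ :=
        congrArg of hrot
    _ = vecMulVec (U.col (Sum.inl k)) (V.col k) := by
        rw [hsingle, mul_vecMulVec, vecMulVec_mul, vecMul_transpose, mulVec_single_one,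
          mulVec_single_one]

theorem IsRankOnePart.hasFDerivAt (hK : IsRankOnePart τ K) (h : IsSVD (of Y) s U V)
    (hτ : Filter.Tendsto τ (nhds Y) (nhds (s k))) (hk : s k ≠ 0)
    (hs : ∀ j ≠ k, s j ^ 2 ≠ s k ^ 2) :
    HasFDerivAt K (LinearMap.toContinuousLinearMap (h.rotation.symm.conj (rankOnePartDeriv s k)))
      Y := by
  let φ := h.rotation.toContinuousLinearEquiv
  have hrot := (hK.rotate h).hasFDerivAt_rectDiagonal (hτ.comp h.tendsto_rotation_symm) hk hs
  rw [← h.rotation_self] at hrot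
  have hcomp := φ.symm.hasFDerivAt.comp Y (hrot.comp Y φ.hasFDerivAt)
  refine (hcomp.congr_fderiv ?_).congr_of_eventuallyEq (.of_forall fun X => ?_)
  · rfl
  · exact (by simp [φ])

theorem det_id_add_smul_rotation_conj (h : IsSVD (of Y) s U V) (hk : s k ≠ 0)
    (hs : ∀ j ≠ k, s j ^ 2 ≠ s k ^ 2) (t : ℝ) :
    LinearMap.det (LinearMap.id + t • h.rotation.symm.conj (rankOnePartDeriv s k)) *
        (s k ^ Fintype.card ρ * ∏ j ∈ Finset.univ.erase k, (s k ^ 2 - s j ^ 2)) =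
      (s k + t) ^ Fintype.card ρ * ∏ j ∈ Finset.univ.erase k, ((s k + t) ^ 2 - s j ^ 2) := by
  rw [← LinearEquiv.conj_id h.rotation.symm, ← map_smul, ← map_add, LinearEquiv.conj_apply,
    LinearMap.comp_assoc, LinearMap.det_conj]
  exact det_id_add_smul_rankOnePartDeriv hk hs t

theorem IsRankOnePart.exists_hasFDerivAt_add_smul (hK : IsRankOnePart τ K)
    (h : IsSVD (of Y) s U V) (hτ : Filter.Tendsto τ (nhds Y) (nhds (s k))) (hk : s k ≠ 0)
    (hs : ∀ j ≠ k, s j ^ 2 ≠ s k ^ 2) (t : ℝ) :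
    ∃ L : (m → κ → ℝ) →L[ℝ] (m → κ → ℝ), HasFDerivAt (fun X => X + t • K X) L Y ∧
      L.det * (s k ^ Fintype.card ρ * ∏ j ∈ Finset.univ.erase k, (s k ^ 2 - s j ^ 2)) =
        (s k + t) ^ Fintype.card ρ * ∏ j ∈ Finset.univ.erase k, ((s k + t) ^ 2 - s j ^ 2) :=
  ⟨_, (hasFDerivAt_id Y).add ((hK.hasFDerivAt h hτ hk hs).const_smul t),
    det_id_add_smul_rotation_conj h hk hs t⟩

end Rotation

section Flow

/-- The lower limit of the top singular value when `r` lists the other ones: `d₂`, or `0` for a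
matrix with a single column. -/
noncomputable def maxZero {n : ℕ} (r : Fin n → ℝ) : ℝ :=
  Finset.univ.fold max 0 r

theorem maxZero_lt_iff {n : ℕ} {r : Fin n → ℝ} {z : ℝ} : maxZero r < z ↔ 0 < z ∧ ∀ j, r j < z := by
  simp [maxZero, Finset.fold_max_lt]

theorem measurable_maxZero (n : ℕ) : Measurable (maxZero (n := n)) := by
  refine measurable_of_Iio fun z => ?_
  have hpre : maxZero (n := n) ⁻¹' Set.Iio z = {_r | 0 < z} ∩ ⋂ j, {r | r j < z} := by
    ext r
    simp [maxZero_lt_iff]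
  rw [hpre]
  exact (MeasurableSet.const _).inter
    (.iInter fun j => measurableSet_lt (measurable_pi_apply j) measurable_const)

/-- The factor of the density of the singular values of a matrix with `k` more rows than columns
that depends on the top one `z`, when `r` lists the other ones. -/
noncomputable def topJacobian {n : ℕ} (k : ℕ) (r : Fin n → ℝ) (z : ℝ) : ℝ :=
  z ^ k * ∏ j, (z ^ 2 - r j ^ 2)

theorem topJacobian_pos {n : ℕ} (k : ℕ) {r : Fin n → ℝ} (hr : ∀ j, 0 ≤ r j) {z : ℝ}
    (hz : maxZero r < z) : 0 < topJacobian k r z := by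
  obtain ⟨hz₀, hrz⟩ := maxZero_lt_iff.mp hz
  refine mul_pos (pow_pos hz₀ k) (Finset.prod_pos fun j _ => sub_pos.mpr ?_)
  exact pow_lt_pow_left₀ (hrz j) (hr j) two_ne_zero

theorem measurable_topJacobian (n k : ℕ) :
    Measurable (Function.uncurry (topJacobian (n := n) k)) := by
  unfold topJacobian Function.uncurry
  fun_prop

theorem prod_univ_erase_zero {n : ℕ} (f : Fin (n + 1) → ℝ) :
    ∏ j ∈ Finset.univ.erase 0, f j = ∏ j : Fin n, f j.succ := by
  rw [Fin.univ_succ, Finset.erase_cons, Finset.prod_map]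
  rfl

variable {m : Type*} [Fintype m] {n : ℕ}
  {K : (m → Fin (n + 1) → ℝ) → m → Fin (n + 1) → ℝ}

/-- The matrices whose top singular value stays positive and strictly above the other ones when it
is moved by `t`. -/
def shiftDomain (m : Type*) [Fintype m] (n : ℕ) (t : ℝ) : Set (m → Fin (n + 1) → ℝ) :=
  {Y | maxZero (Fin.tail (singularValues (of Y))) < singularValues (of Y) 0 ∧
    maxZero (Fin.tail (singularValues (of Y))) < singularValues (of Y) 0 + t}

theorem measurable_singularValues_zero (hm : n + 1 ≤ Fintype.card m) :
    Measurable fun Y : m → Fin (n + 1) → ℝ => singularValues (of Y) 0 :=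
  measurable_pi_iff.mp (measurable_singularValues hm) 0

theorem measurable_tail (n : ℕ) : Measurable fun s : Fin (n + 1) → ℝ => Fin.tail s :=
  measurable_pi_lambda _ fun j => measurable_pi_apply j.succ

theorem measurable_tail_singularValues (hm : n + 1 ≤ Fintype.card m) :
    Measurable fun Y : m → Fin (n + 1) → ℝ => Fin.tail (singularValues (of Y)) :=
  (measurable_tail n).comp (measurable_singularValues hm)

theorem measurableSet_shiftDomain (hm : n + 1 ≤ Fintype.card m) (t : ℝ) :
    MeasurableSet (shiftDomain m n t) := by
  have hx := measurable_singularValues_zero hm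
  have hr := (measurable_maxZero n).comp (measurable_tail_singularValues hm)
  exact (measurableSet_lt hr hx).inter (measurableSet_lt hr (hx.add_const t))

theorem exists_isRankOnePart_singularValues (hm : n + 1 ≤ Fintype.card m) :
    ∃ K : (m → Fin (n + 1) → ℝ) → m → Fin (n + 1) → ℝ,
      IsRankOnePart (fun Y => singularValues (of Y) 0) K := by
  choose u v huv using fun Y : m → Fin (n + 1) → ℝ => exists_isSingularPair hm (of Y) 0
  exact ⟨fun Y => vecMulVec (u Y) (v Y), fun Y => ⟨u Y, v Y, huv Y, rfl⟩⟩

theorem tendsto_singularValues_zero (hm : n + 1 ≤ Fintype.card m) (Y : m → Fin (n + 1) → ℝ) :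
    Filter.Tendsto (fun X : m → Fin (n + 1) → ℝ => singularValues (of X) 0) (nhds Y)
      (nhds (singularValues (of Y) 0)) :=
  (lipschitzWith_singularValues_zero hm).continuous.tendsto Y

theorem singularValues_sq_ne_of_maxZero_lt {A : Matrix m (Fin (n + 1)) ℝ}
    (hA : maxZero (Fin.tail (singularValues A)) < singularValues A 0) :
    ∀ j ≠ 0, singularValues A j ^ 2 ≠ singularValues A 0 ^ 2 := by
  intro j hj
  obtain ⟨i, rfl⟩ := Fin.exists_succ_eq.mpr hj
  exact (pow_lt_pow_left₀ ((maxZero_lt_iff.mp hA).2 i) (singularValues_nonneg A _)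
    two_ne_zero).ne

theorem IsSVD.update_eq_singularValues [DecidableEq m] {ρ : Type*} [Fintype ρ] [DecidableEq ρ]
    (hm : n + 1 ≤ Fintype.card m) {A : Matrix m (Fin (n + 1)) ℝ} {s : Fin (n + 1) → ℝ} {z : ℝ}
    {U : Matrix m (Fin (n + 1) ⊕ ρ) ℝ} {V : Matrix (Fin (n + 1)) (Fin (n + 1)) ℝ}
    (h : IsSVD A (Function.update s 0 z) U V) (hs : Antitone s) (hs₀ : ∀ j, 0 ≤ s j)
    (hz : maxZero (Fin.tail s) < z) : Function.update s 0 z = singularValues A := by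
  obtain ⟨hz₀, hsz⟩ := maxZero_lt_iff.mp hz
  refine (eq_singularValues_iff hm A _).mpr ⟨fun i j hij => ?_, fun j => ?_,
    h.charpoly_transpose_mul_self⟩
  · induction i using Fin.cases with
    | zero =>
      induction j using Fin.cases with
      | zero => rfl
      | succ j => simpa [Fin.tail] using (hsz j).le
    | succ i =>
      obtain ⟨j, rfl⟩ := Fin.exists_succ_eq.mpr (((Fin.succ_pos i).trans_le hij).ne')
      simpa using hs hij
  · induction j using Fin.cases with
    | zero => simpa using hz₀.le
    | succ j => simpa using hs₀ j.succ

/-- The singular vectors are unchanged along the flow, so the top rank-one part is too. -/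
theorem IsRankOnePart.singularValues_add_smul
    (hK : IsRankOnePart (fun Y => singularValues (of Y) 0) K) (hm : n + 1 ≤ Fintype.card m)
    {t : ℝ} {Y : m → Fin (n + 1) → ℝ} (hY : Y ∈ shiftDomain m n t) :
    singularValues (of (Y + t • K Y)) =
        Function.update (singularValues (of Y)) 0 (singularValues (of Y) 0 + t) ∧
      K (Y + t • K Y) = K Y := by
  classical
  obtain ⟨hlt, hlt_add⟩ := hY
  obtain ⟨U, V, h⟩ := exists_isSVD_of_le_card hm (of Y)
  have apply_eq := hK.apply_eq_vecMulVec h (tendsto_singularValues_zero hm Y)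
    (maxZero_lt_iff.mp hlt).1.ne' (singularValues_sq_ne_of_maxZero_lt hlt)
  have hadd : IsSVD (of (Y + t • K Y)) (Function.update (singularValues (of Y)) 0
      (singularValues (of Y) 0 + t)) U V := by
    rw [← of_add_of, ← smul_of, apply_eq]
    exact h.add_smul_vecMulVec 0 t
  have hsv := hadd.update_eq_singularValues hm (singularValues_antitone _)
    (singularValues_nonneg _) hlt_add
  refine ⟨hsv.symm, ?_⟩
  have hlt' : maxZero (Fin.tail (singularValues (of (Y + t • K Y)))) <
      singularValues (of (Y + t • K Y)) 0 := by
    rw [← hsv, Fin.tail_update_zero, Function.update_self]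
    exact hlt_add
  rw [hsv] at hadd
  exact of.injective ((hK.apply_eq_vecMulVec hadd (tendsto_singularValues_zero hm _)
    (maxZero_lt_iff.mp hlt').1.ne' (singularValues_sq_ne_of_maxZero_lt hlt')).trans apply_eq.symm)

theorem IsRankOnePart.add_smul_mem_shiftDomain
    (hK : IsRankOnePart (fun Y => singularValues (of Y) 0) K) (hm : n + 1 ≤ Fintype.card m)
    {t : ℝ} {Y : m → Fin (n + 1) → ℝ} (hY : Y ∈ shiftDomain m n t) :
    Y + t • K Y ∈ shiftDomain m n (-t) := by
  have hsv := (hK.singularValues_add_smul hm hY).1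
  rw [shiftDomain, Set.mem_ofPred_eq, hsv, Fin.tail_update_zero, Function.update_self,
    add_neg_cancel_right]
  exact hY.symm

theorem IsRankOnePart.add_neg_smul_add_smul
    (hK : IsRankOnePart (fun Y => singularValues (of Y) 0) K) (hm : n + 1 ≤ Fintype.card m)
    {t : ℝ} {Y : m → Fin (n + 1) → ℝ} (hY : Y ∈ shiftDomain m n t) :
    (Y + t • K Y) + (-t) • K (Y + t • K Y) = Y := by
  rw [(hK.singularValues_add_smul hm hY).2, neg_smul, add_neg_cancel_right]

theorem IsRankOnePart.injOn_add_smul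
    (hK : IsRankOnePart (fun Y => singularValues (of Y) 0) K) (hm : n + 1 ≤ Fintype.card m)
    {t : ℝ} : Set.InjOn (fun Y => Y + t • K Y) (shiftDomain m n t) :=
  Set.LeftInvOn.injOn (f₁' := fun Y => Y + (-t) • K Y) fun _ hY =>
    hK.add_neg_smul_add_smul hm hY

theorem IsRankOnePart.image_add_smul
    (hK : IsRankOnePart (fun Y => singularValues (of Y) 0) K) (hm : n + 1 ≤ Fintype.card m)
    {t : ℝ} : (fun Y => Y + t • K Y) '' shiftDomain m n t = shiftDomain m n (-t) := by
  refine Set.Subset.antisymm (Set.image_subset_iff.mpr fun Y hY =>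
    hK.add_smul_mem_shiftDomain hm hY) fun Z hZ => ⟨Z + (-t) • K Z, ?_, ?_⟩
  · simpa using hK.add_smul_mem_shiftDomain hm hZ
  · simpa using hK.add_neg_smul_add_smul hm hZ

theorem IsRankOnePart.exists_hasFDerivAt_add_smul_det_eq
    (hK : IsRankOnePart (fun Y => singularValues (of Y) 0) K) (hm : n + 1 ≤ Fintype.card m)
    {t : ℝ} {Y : m → Fin (n + 1) → ℝ} (hY : Y ∈ shiftDomain m n t) :
    ∃ L : (m → Fin (n + 1) → ℝ) →L[ℝ] (m → Fin (n + 1) → ℝ),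
      HasFDerivAt (fun X => X + t • K X) L Y ∧
      L.det * topJacobian (Fintype.card m - (n + 1)) (Fin.tail (singularValues (of Y)))
          (singularValues (of Y) 0) =
        topJacobian (Fintype.card m - (n + 1)) (Fin.tail (singularValues (of Y)))
          (singularValues (of Y) 0 + t) := by
  classical
  obtain ⟨U, V, h⟩ := exists_isSVD_of_le_card hm (of Y)
  obtain ⟨L, hL, hdet⟩ := hK.exists_hasFDerivAt_add_smul h (tendsto_singularValues_zero hm Y)
    (maxZero_lt_iff.mp hY.1).1.ne' (singularValues_sq_ne_of_maxZero_lt hY.1) t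
  refine ⟨L, hL, ?_⟩
  simpa only [prod_univ_erase_zero, Fintype.card_fin, topJacobian, Fin.tail] using hdet

/-- Lebesgue measure on the matrices with a simple positive top singular value, divided by the
Jacobian of the singular value decomposition as a function of that singular value. -/
noncomputable def topSingularValueMeasure (m : Type*) [Fintype m] (n : ℕ) :
    Measure (m → Fin (n + 1) → ℝ) :=
  (volume.restrict (shiftDomain m n 0)).withDensity fun Y =>
    (ENNReal.ofReal (topJacobian (Fintype.card m - (n + 1)) (Fin.tail (singularValues (of Y)))
      (singularValues (of Y) 0)))⁻¹

theorem topJacobian_singularValues_pos (k : ℕ) {A : Matrix m (Fin (n + 1)) ℝ} {z : ℝ}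
    (hz : maxZero (Fin.tail (singularValues A)) < z) :
    0 < topJacobian k (Fin.tail (singularValues A)) z :=
  topJacobian_pos k (fun j => singularValues_nonneg A j.succ) hz

theorem measurable_topJacobian_singularValues (hm : n + 1 ≤ Fintype.card m) (k : ℕ) :
    Measurable fun Y : m → Fin (n + 1) → ℝ =>
      topJacobian k (Fin.tail (singularValues (of Y))) (singularValues (of Y) 0) :=
  (measurable_topJacobian n k).comp ((measurable_tail_singularValues hm).prodMk
    (measurable_singularValues_zero hm))

theorem setLIntegral_topSingularValueMeasure (hm : n + 1 ≤ Fintype.card m) (t : ℝ)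
    {f : (m → Fin (n + 1) → ℝ) → ENNReal} (hf : Measurable f) :
    ∫⁻ Y in {Y | maxZero (Fin.tail (singularValues (of Y))) < singularValues (of Y) 0 + t}, f Y
        ∂topSingularValueMeasure m n =
      ∫⁻ Y in shiftDomain m n t, (ENNReal.ofReal (topJacobian (Fintype.card m - (n + 1))
        (Fin.tail (singularValues (of Y))) (singularValues (of Y) 0)))⁻¹ * f Y := by
  have hmeas : MeasurableSet {Y : m → Fin (n + 1) → ℝ |
      maxZero (Fin.tail (singularValues (of Y))) < singularValues (of Y) 0 + t} :=
    measurableSet_lt ((measurable_maxZero n).comp (measurable_tail_singularValues hm))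
      ((measurable_singularValues_zero hm).add_const t)
  have hinter : {Y : m → Fin (n + 1) → ℝ | maxZero (Fin.tail (singularValues (of Y))) <
      singularValues (of Y) 0 + t} ∩ shiftDomain m n 0 = shiftDomain m n t := by
    ext Y
    simp [shiftDomain, and_comm]
  refine (setLIntegral_withDensity_eq_setLIntegral_mul _
    (measurable_topJacobian_singularValues hm _).ennreal_ofReal.inv hf hmeas).trans ?_
  rw [Measure.restrict_restrict hmeas, hinter]
  rfl

theorem isShiftInvariant_topSingularValueMeasure (hm : n + 1 ≤ Fintype.card m) :
    IsShiftInvariant (topSingularValueMeasure m n) (fun Y => singularValues (of Y) 0)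
      (fun Y => Fin.tail (singularValues (of Y))) maxZero := by
  intro t f hf
  have hx := measurable_singularValues_zero hm
  have hr := measurable_tail_singularValues hm
  obtain ⟨K, hK⟩ := exists_isRankOnePart_singularValues hm
  choose! L hL hdet using fun Y hY => hK.exists_hasFDerivAt_add_smul_det_eq (t := t) hm (Y := Y) hY
  refine (setLIntegral_topSingularValueMeasure hm t
    (hf.comp ((hx.add_const t).prodMk hr))).trans (Eq.trans ?_
      (setLIntegral_topSingularValueMeasure hm (-t) (hf.comp (hx.prodMk hr))).symm)
  rw [← hK.image_add_smul hm, lintegral_image_eq_lintegral_abs_det_fderiv_mul volume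
      (measurableSet_shiftDomain hm t) (fun Y hY => (hL Y hY).hasFDerivWithinAt)
      (hK.injOn_add_smul hm)]
  refine setLIntegral_congr_fun (measurableSet_shiftDomain hm t) fun Y hY => ?_
  have hpos := topJacobian_singularValues_pos (Fintype.card m - (n + 1)) hY.1
  have hpos_add := topJacobian_singularValues_pos (Fintype.card m - (n + 1)) hY.2
  simp only [Function.comp_apply, (hK.singularValues_add_smul hm hY).1, Fin.tail_update_zero,
    Function.update_self]
  rw [eq_div_of_mul_eq hpos.ne' (hdet Y hY), abs_of_pos (div_pos hpos_add hpos),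
    ENNReal.ofReal_div_of_pos hpos, ← mul_assoc, ENNReal.div_eq_inv_mul,
    mul_assoc _ (ENNReal.ofReal _), ENNReal.mul_inv_cancel (by simpa using hpos_add)
      ENNReal.ofReal_ne_top, mul_one]

end Flow

section Gaussian

theorem integrable_exp_neg_sq_div_mul_eval {c : ℝ} (hc : 0 < c) (P : Polynomial ℝ) :
    Integrable fun z : ℝ => Real.exp (-(z ^ 2) / c) * P.eval z := by
  induction P using Polynomial.induction_on' with
  | add P Q hP hQ =>
    simp only [Polynomial.eval_add, mul_add]
    exact hP.add hQ
  | monomial k a =>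
    have hk : (-1 : ℝ) < k := neg_one_lt_zero.trans_le k.cast_nonneg
    refine ((integrable_rpow_mul_exp_neg_mul_sq (inv_pos.mpr hc) hk).const_mul a).congr
      (.of_forall fun z => ?_)
    simp only [Real.rpow_natCast, Polynomial.eval_monomial]
    rw [show -(z ^ 2) / c = -c⁻¹ * z ^ 2 by ring]
    ring

variable {N n : ℕ} {v : NNReal}

/-- The density, up to a constant factor, of the top singular value of a Gaussian matrix with `k`
more rows than columns given the list `r` of the other ones. -/
noncomputable def gaussianTopDensity {n : ℕ} (v : ℝ) (k : ℕ) (r : Fin n → ℝ) (z : ℝ) : ℝ :=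
  Real.exp (-(z ^ 2) / (2 * v)) * topJacobian k r z

theorem measurable_gaussianTopDensity (n : ℕ) (v : ℝ) (k : ℕ) :
    Measurable (Function.uncurry (gaussianTopDensity (n := n) v k)) :=
  (by fun_prop : Measurable fun w : (Fin n → ℝ) × ℝ => Real.exp (-(w.2 ^ 2) / (2 * v))).mul
    (measurable_topJacobian n k)

theorem continuous_gaussianTopDensity (v : ℝ) (k : ℕ) (r : Fin n → ℝ) :
    Continuous (gaussianTopDensity v k r) := by
  unfold gaussianTopDensity topJacobian
  fun_prop

theorem integrable_gaussianTopDensity {v : ℝ} (hv : 0 < v) (k : ℕ) (r : Fin n → ℝ) :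
    Integrable (gaussianTopDensity v k r) := by
  have hint := integrable_exp_neg_sq_div_mul_eval (mul_pos two_pos hv)
    (Polynomial.X ^ k * ∏ j, (Polynomial.X ^ 2 - Polynomial.C (r j ^ 2)))
  simp only [Polynomial.eval_mul, Polynomial.eval_pow, Polynomial.eval_X, Polynomial.eval_prod,
    Polynomial.eval_sub, Polynomial.eval_C] at hint
  exact hint

/-- The part of the density of an `N × (n + 1)` Gaussian matrix that does not depend on its top
singular value. -/
noncomputable def gaussianRestDensity {n : ℕ} (N : ℕ) (v : ℝ) (r : Fin n → ℝ) : ℝ :=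
  (√(2 * Real.pi * v))⁻¹ ^ ((n + 1) * N) * Real.exp (-(∑ j, r j ^ 2) / (2 * v))

theorem gaussianRestDensity_pos {v : ℝ} (hv : 0 < v) (r : Fin n → ℝ) :
    0 < gaussianRestDensity N v r := by
  unfold gaussianRestDensity
  positivity

theorem measurable_gaussianRestDensity_mul_gaussianTopDensity (n N : ℕ) (v : ℝ) (k : ℕ) :
    Measurable (Function.uncurry fun (r : Fin n → ℝ) z =>
      gaussianRestDensity N v r * gaussianTopDensity v k r z) := by
  have hrest : Measurable (gaussianRestDensity (n := n) N v) := by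
    unfold gaussianRestDensity
    fun_prop
  exact (hrest.comp measurable_fst).mul (measurable_gaussianTopDensity n v k)

theorem gaussianRestDensity_mul_exp (hn : n + 1 ≤ N) (Y : Fin N → Fin (n + 1) → ℝ) (v : ℝ) :
    gaussianRestDensity N v (Fin.tail (singularValues (of Y))) *
        Real.exp (-(singularValues (of Y) 0 ^ 2) / (2 * v)) =
      (√(2 * Real.pi * v))⁻¹ ^ ((n + 1) * N) *
        Real.exp (-(∑ i, ∑ j, Y i j ^ 2) / (2 * v)) := by
  have hsum : ∑ i, ∑ j, Y i j ^ 2 =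
      singularValues (of Y) 0 ^ 2 + ∑ j, Fin.tail (singularValues (of Y)) j ^ 2 :=
    (sum_sq_eq_sum_sq_singularValues (by simpa using hn) (of Y)).trans (Fin.sum_univ_succ _)
  rw [gaussianRestDensity, mul_assoc, ← Real.exp_add, hsum]
  congr 2
  ring

theorem ae_mem_shiftDomain_zero {m : Type*} [Fintype m] (hm : n + 1 ≤ Fintype.card m) :
    ∀ᵐ Y : m → Fin (n + 1) → ℝ, Y ∈ shiftDomain m n 0 := by
  filter_upwards [ae_singularValues_zero_pos_and_succ_lt hm] with Y hY
  have hlt := maxZero_lt_iff.mpr hY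
  exact ⟨hlt, hlt.trans_eq (add_zero _).symm⟩

theorem pi_pi_gaussianReal_eq_topSingularValueMeasure_withDensity (hn : n + 1 ≤ N) (hv : v ≠ 0) :
    Measure.pi (fun _ : Fin N => Measure.pi fun _ : Fin (n + 1) => gaussianReal 0 v) =
      (topSingularValueMeasure (Fin N) n).withDensity fun Y => ENNReal.ofReal
        (gaussianRestDensity N v (Fin.tail (singularValues (of Y))) *
          gaussianTopDensity v (N - (n + 1)) (Fin.tail (singularValues (of Y)))
            (singularValues (of Y) 0)) := by
  have hm : n + 1 ≤ Fintype.card (Fin N) := by simpa using hn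
  rw [pi_pi_gaussianReal_eq_withDensity N (n + 1) hv, topSingularValueMeasure,
    Measure.restrict_eq_self_of_ae_mem (ae_mem_shiftDomain_zero hm)]
  refine .trans (withDensity_congr_ae ?_) (withDensity_mul _
    (measurable_topJacobian_singularValues hm _).ennreal_ofReal.inv
    ((measurable_gaussianRestDensity_mul_gaussianTopDensity n N v (N - (n + 1))).comp
      ((measurable_tail_singularValues hm).prodMk
        (measurable_singularValues_zero hm))).ennreal_ofReal)
  filter_upwards [ae_mem_shiftDomain_zero hm] with Y hY
  have hpos := topJacobian_singularValues_pos (N - (n + 1)) hY.1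
  simp only [Pi.mul_apply, Fintype.card_fin]
  rw [← gaussianRestDensity_mul_exp hn, gaussianTopDensity, ← mul_assoc,
    ENNReal.ofReal_mul' hpos.le, mul_left_comm,
    ENNReal.inv_mul_cancel (by simpa using hpos) ENNReal.ofReal_ne_top, mul_one]

instance (m : Type*) [Fintype m] (n : ℕ) : SFinite (topSingularValueMeasure m n) := by
  unfold topSingularValueMeasure
  infer_instance

/-- The Kac–Rice statistic `S_{1,0}` of a matrix with `k` more rows than columns and singular
values `s`, the entries having variance `v` under the null hypothesis. -/
noncomputable def kacRiceStatistic {n : ℕ} (v : ℝ) (k : ℕ) (s : Fin (n + 1) → ℝ) : ℝ :=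
  survivalRatio (gaussianTopDensity v k (Fin.tail s)) (maxZero (Fin.tail s)) (s 0)

theorem measurable_kacRiceStatistic (n : ℕ) (v : ℝ) (k : ℕ) :
    Measurable (kacRiceStatistic (n := n) v k) := by
  have hratio : Measurable fun w : (Fin n → ℝ) × ℝ =>
      survivalRatio (gaussianTopDensity v k w.1) (maxZero w.1) w.2 :=
    measurable_survivalRatio (measurable_maxZero n) (measurable_gaussianTopDensity n v k)
  unfold kacRiceStatistic
  exact hratio.comp ((measurable_tail n).prodMk (measurable_pi_apply 0))

theorem kacRiceStatistic_eq_div (v : ℝ) (k : ℕ) (s : Fin (n + 1) → ℝ) :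
    kacRiceStatistic v k s =
      (∫ z in Set.Ioi (s 0), Real.exp (-(z ^ 2) / (2 * v)) * z ^ k *
        ∏ j ∈ Finset.univ.erase 0, (z ^ 2 - s j ^ 2)) /
      ∫ z in {z : ℝ | 0 < z ∧ ∀ j : Fin (n + 1), 1 ≤ (j : ℕ) → s j < z},
        Real.exp (-(z ^ 2) / (2 * v)) * z ^ k *
          ∏ j ∈ Finset.univ.erase 0, (z ^ 2 - s j ^ 2) := by
  have hset : {z : ℝ | 0 < z ∧ ∀ j : Fin (n + 1), 1 ≤ (j : ℕ) → s j < z} =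
      Set.Ioi (maxZero (Fin.tail s)) := by
    ext z
    simp [maxZero_lt_iff, Fin.forall_fin_succ, Fin.tail]
  simp only [hset, prod_univ_erase_zero, mul_assoc]
  rfl

theorem map_kacRiceStatistic_pi_pi_gaussianReal (hn : n + 1 ≤ N) (hv : v ≠ 0) :
    Measure.map (fun Y : Fin N → Fin (n + 1) → ℝ =>
        kacRiceStatistic v (N - (n + 1)) (singularValues (of Y)))
        (Measure.pi fun _ => Measure.pi fun _ => gaussianReal 0 v) =
      volume.restrict (Set.Ioo 0 1) := by
  have hm : n + 1 ≤ Fintype.card (Fin N) := by simpa using hn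
  have hv₀ : (0 : ℝ) < v := NNReal.coe_pos.mpr (pos_iff_ne_zero.mpr hv)
  have hgauss := pi_pi_gaussianReal_eq_topSingularValueMeasure_withDensity hn hv
  have huniform := (isShiftInvariant_topSingularValueMeasure hm).map_survivalRatio_withDensity
    (q := fun r z => gaussianRestDensity N v r * gaussianTopDensity v (N - (n + 1)) r z)
    (measurable_singularValues_zero hm) (measurable_tail_singularValues hm) (measurable_maxZero n)
    (measurable_gaussianRestDensity_mul_gaussianTopDensity n N v _)
    (fun Y => (continuous_gaussianTopDensity _ _ _).const_mul _)
    (fun Y => ((integrable_gaussianTopDensity hv₀ _ _).const_mul _).integrableOn)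
    (fun Y z hz => mul_pos (gaussianRestDensity_pos hv₀ _)
      (mul_pos (Real.exp_pos _) (topJacobian_singularValues_pos _ hz)))
  simp only [survivalRatio_const_mul (gaussianRestDensity_pos hv₀ _).ne'] at huniform
  have hmass : ∫⁻ Y, ENNReal.ofReal (gaussianRestDensity N v (Fin.tail (singularValues (of Y))) *
      gaussianTopDensity v (N - (n + 1)) (Fin.tail (singularValues (of Y)))
        (singularValues (of Y) 0)) ∂topSingularValueMeasure (Fin N) n = 1 := by
    rw [← setLIntegral_univ, ← withDensity_apply _ MeasurableSet.univ, ← hgauss, measure_univ]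
  rwa [hmass, one_smul, ← hgauss] at huniform

end Gaussian

theorem kac_rice_global_null_uniform_general
    (N p : ℕ) (hNp : p ≤ N) (hp : 1 ≤ p) (σ : ℝ) (hσ : 0 < σ)
    {Ω : Type*} [MeasurableSpace Ω] (P : Measure Ω)
    (Y : Ω → Fin N → Fin p → ℝ) (d : Ω → Fin p → ℝ) (hYm : Measurable Y)
    (hlaw : Measure.map Y P =
      Measure.pi (fun _ : Fin N => Measure.pi (fun _ : Fin p =>
        gaussianReal 0 ⟨σ ^ 2, sq_nonneg σ⟩)))
    (hSVD : ∀ ω, ∃ U : Matrix (Fin N) (Fin p) ℝ, ∃ V : Matrix (Fin p) (Fin p) ℝ,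
      Matrix.of (Y ω) = U * Matrix.diagonal (d ω) * Vᵀ ∧ Uᵀ * U = 1 ∧ Vᵀ * V = 1)
    (hanti : ∀ ω, Antitone (d ω))
    (hnonneg : ∀ ω i, 0 ≤ d ω i) :
    Measure.map (fun ω =>
      (∫ z in Set.Ioi (d ω ⟨0, hp⟩),
        Real.exp (-(z ^ 2) / (2 * σ ^ 2)) * z ^ (N - p) *
          ∏ j ∈ Finset.univ.erase (⟨0, hp⟩ : Fin p), (z ^ 2 - d ω j ^ 2)) /
      (∫ z in {z : ℝ | 0 < z ∧ ∀ j : Fin p, 1 ≤ (j : ℕ) → d ω j < z},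
        Real.exp (-(z ^ 2) / (2 * σ ^ 2)) * z ^ (N - p) *
          ∏ j ∈ Finset.univ.erase (⟨0, hp⟩ : Fin p), (z ^ 2 - d ω j ^ 2))) P
      = volume.restrict (Set.Ioo (0 : ℝ) 1) := by
  obtain ⟨n, rfl⟩ := Nat.exists_eq_add_of_le' hp
  have hm : n + 1 ≤ Fintype.card (Fin N) := by simpa using hNp
  have hv : (⟨σ ^ 2, sq_nonneg σ⟩ : NNReal) ≠ 0 := fun h =>
    (pow_pos hσ 2).ne' (congrArg NNReal.toReal h)
  have hd (ω : Ω) : d ω = singularValues (of (Y ω)) := by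
    obtain ⟨U, V, hY, hU, hV⟩ := hSVD ω
    rw [hY]
    exact eq_singularValues_of_thin_svd hm hU hV (hanti ω) (hnonneg ω)
  have hS : Measurable fun X : Fin N → Fin (n + 1) → ℝ =>
      kacRiceStatistic (σ ^ 2) (N - (n + 1)) (singularValues (of X)) :=
    (measurable_kacRiceStatistic n _ _).comp (measurable_singularValues hm)
  simp only [Fin.mk_zero, ← kacRiceStatistic_eq_div, hd]
  refine (Measure.map_map hS hYm).symm.trans ?_
  rw [hlaw]
  exact map_kacRiceStatistic_pi_pi_gaussianReal hNp hv

/-- **The Kac–Rice global null test statistic is uniform (Section 2.1.1).**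
Let `Y ∈ ℝ^{N×p}` (`N > p ≥ 1`) have i.i.d. `N(0,σ²)` entries (i.e. `B = 0`, the global
null), and let `d 0 ≥ d 1 ≥ ⋯ ≥ d (p-1) ≥ 0` be its (measurably chosen) singular values,
characterized by an SVD `Y = U D Vᵀ`.  Then
`S_{1,0} = (∫_{d₁}^∞ e^{-z²/(2σ²)} z^{N-p} ∏_{j=2}^p (z²-d_j²) dz) /
          (∫_{d₂}^∞ e^{-z²/(2σ²)} z^{N-p} ∏_{j=2}^p (z²-d_j²) dz)`
is uniform on `(0,1)`.  The lower limit `d₂` of the denominator is encoded (using `d ≥ 0`)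
by the condition `0 < z ∧ ∀ j ≥ 1 (zero-based), d j < z`. -/
theorem kac_rice_global_null_uniform
    (N p : ℕ) (hNp : p < N) (hp : 1 ≤ p)
    (σ : ℝ) (hσ : 0 < σ)
    {Ω : Type} [MeasurableSpace Ω] (P : Measure Ω) [IsProbabilityMeasure P]
    (Y : Ω → Fin N → Fin p → ℝ) (d : Ω → Fin p → ℝ)
    (hYm : Measurable Y) (hdm : Measurable d)
    (hlaw : Measure.map Y P =
      Measure.pi (fun _ : Fin N => Measure.pi (fun _ : Fin p =>
        gaussianReal 0 ⟨σ ^ 2, sq_nonneg σ⟩)))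
    (hSVD : ∀ ω, ∃ U : Matrix (Fin N) (Fin p) ℝ, ∃ V : Matrix (Fin p) (Fin p) ℝ,
      Matrix.of (Y ω) = U * Matrix.diagonal (d ω) * Vᵀ ∧ Uᵀ * U = 1 ∧ Vᵀ * V = 1)
    (hanti : ∀ ω, Antitone (d ω))
    (hnonneg : ∀ ω i, 0 ≤ d ω i) :
    Measure.map (fun ω =>
      (∫ z in Set.Ioi (d ω ⟨0, by omega⟩),
        Real.exp (-(z ^ 2) / (2 * σ ^ 2)) * z ^ (N - p) *
          ∏ j ∈ Finset.univ.erase (⟨0, by omega⟩ : Fin p), (z ^ 2 - d ω j ^ 2)) /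
      (∫ z in {z : ℝ | 0 < z ∧ ∀ j : Fin p, 1 ≤ (j : ℕ) → d ω j < z},
        Real.exp (-(z ^ 2) / (2 * σ ^ 2)) * z ^ (N - p) *
          ∏ j ∈ Finset.univ.erase (⟨0, by omega⟩ : Fin p), (z ^ 2 - d ω j ^ 2))) P
      = volume.restrict (Set.Ioo (0 : ℝ) 1) :=
  kac_rice_global_null_uniform_general N p hNp.le hp σ hσ P Y d hYm hlaw hSVD hanti hnonneg
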